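/- arXiv:2405.06587 — 3 statements merged into one kernel-verified Lean document; each statement's English description precedes it below -/
import Mathlib

section
/- Set w₀ := Σ_{i=1}^{N} (u v⁻¹)^{m_i}·e_{i'} ⊗ e_i ∈ F^N ⊗ F^N, where (e_i) is the standard basis. Then for every 1 ≤ j ≤ n the following hold: (E_j ⊗ I + Ω_j ⊗ E_j)·w₀ = 0, (I ⊗ F_j + F_j ⊗ Ω'_j)·w₀ = 0, (Ω_j ⊗ Ω_j)·w₀ = w₀, and (Ω'_j ⊗ Ω'_j)·w₀ = w₀, where I is the N×N identity matrix. (Lemma 3.5: w₀ spans the trivial one-dimensional summand of V⊗V.) -/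
/-!
Both sides are computed coordinatewise. Pairing `k` with `k'` makes `w₀` supported on the
antidiagonal, where its value at `(k', k)` is `q ^ m_k` with `q = u v⁻¹`, and `Ω_j` is diagonal.
The vectors `(E_j ⊗ 1) w₀` and `(Ω_j ⊗ E_j) w₀` are therefore supported on the same two
coordinates, `(j, (j+1)')` and `((j+1)', j)`, where their coefficients cancel because consecutive
exponents differ by `m_j - m_{j+1} = 2` for `j < n`, by `m_n - m_{n+1} = 1` for `j = n`, and
`q² = r s⁻¹`. The case of `F_j` is the same. The group-like identities say that the eigenvalues of
`Ω_j` at `k` and `k'` are mutually inverse, and `Ω'_j` is `Ω_j` with `r` and `s` exchanged.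
-/

open Matrix Finset
open scoped Kronecker

/-- The `N×N` matrix unit `E_{ab}` (1-based indices; zero if an index is out of range). -/
def Eunit (F : Type*) [Field F] (n a b : ℕ) :
    Matrix (Fin (2 * n + 1)) (Fin (2 * n + 1)) F :=
  Matrix.of fun i j => if (i : ℕ) + 1 = a ∧ (j : ℕ) + 1 = b then (1 : F) else 0

/-- The primed index `i' = 2n+2−i`. -/
def pr (n i : ℕ) : ℕ := 2 * n + 2 - i

/-- The integers `m_i`: `m_i = 2n+1−2i` for `1 ≤ i ≤ n`, `m_{n+1} = 0`,
and `m_i = 2n+3−2i` for `n+2 ≤ i ≤ 2n+1`. -/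
def mwt (n i : ℕ) : ℤ :=
  if i ≤ n then 2 * (n : ℤ) + 1 - 2 * (i : ℤ)
  else if i = n + 1 then 0
  else 2 * (n : ℤ) + 3 - 2 * (i : ℤ)

/-- The matrix `E_i` of the vector representation: `E_i = E_{i,i+1} − (rs)⁻¹ E_{(i+1)',i'}`
for `1 ≤ i ≤ n−1`, and `E_n = w((uv)⁻¹ E_{n,n+1} − r⁻¹ E_{n+1,n'})`. -/
noncomputable def Emat (F : Type*) [Field F] (n : ℕ) (u v w r s : F) (i : ℕ) :
    Matrix (Fin (2 * n + 1)) (Fin (2 * n + 1)) F :=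
  if i = n then w • ((u * v)⁻¹ • Eunit F n n (n + 1) - r⁻¹ • Eunit F n (n + 1) (pr n n))
  else Eunit F n i (i + 1) - (r * s)⁻¹ • Eunit F n (pr n (i + 1)) (pr n i)

/-- The matrix `F_i` of the vector representation: `F_i = E_{i+1,i} − (rs)⁻¹ E_{i',(i+1)'}`
for `1 ≤ i ≤ n−1`, and `F_n = w((uv)⁻¹ E_{n+1,n} − s⁻¹ E_{n',n+1})`. -/
noncomputable def Fmat (F : Type*) [Field F] (n : ℕ) (u v w r s : F) (i : ℕ) :
    Matrix (Fin (2 * n + 1)) (Fin (2 * n + 1)) F :=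
  if i = n then w • ((u * v)⁻¹ • Eunit F n (n + 1) n - s⁻¹ • Eunit F n (pr n n) (n + 1))
  else Eunit F n (i + 1) i - (r * s)⁻¹ • Eunit F n (pr n i) (pr n (i + 1))

/-- The diagonal matrix `Ω_i` of the vector representation. -/
noncomputable def Om (F : Type*) [Field F] (n : ℕ) (r s : F) (i : ℕ) :
    Matrix (Fin (2 * n + 1)) (Fin (2 * n + 1)) F :=
  if i = n then
    (r * s⁻¹) • Eunit F n n n + Eunit F n (n + 1) (n + 1)
    + (r⁻¹ * s) • Eunit F n (pr n n) (pr n n)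
    + (r * s)⁻¹ • ∑ j ∈ Icc 1 (n - 1), Eunit F n j j
    + (r * s) • ∑ j ∈ Icc (n + 3) (2 * n + 1), Eunit F n j j
  else
    r ^ 2 • Eunit F n i i + s ^ 2 • Eunit F n (i + 1) (i + 1)
    + (s ^ 2)⁻¹ • Eunit F n (pr n (i + 1)) (pr n (i + 1))
    + (r ^ 2)⁻¹ • Eunit F n (pr n i) (pr n i)
    + ∑ j ∈ ((((Icc 1 (2 * n + 1)).erase i).erase (i + 1)).erase (pr n (i + 1))).erase (pr n i),
        Eunit F n j j

/-- The diagonal matrix `Ω'_i` of the vector representation. -/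
noncomputable def Om' (F : Type*) [Field F] (n : ℕ) (r s : F) (i : ℕ) :
    Matrix (Fin (2 * n + 1)) (Fin (2 * n + 1)) F :=
  if i = n then
    (r⁻¹ * s) • Eunit F n n n + Eunit F n (n + 1) (n + 1)
    + (r * s⁻¹) • Eunit F n (pr n n) (pr n n)
    + (r * s)⁻¹ • ∑ j ∈ Icc 1 (n - 1), Eunit F n j j
    + (r * s) • ∑ j ∈ Icc (n + 3) (2 * n + 1), Eunit F n j j
  else
    s ^ 2 • Eunit F n i i + r ^ 2 • Eunit F n (i + 1) (i + 1)
    + (r ^ 2)⁻¹ • Eunit F n (pr n (i + 1)) (pr n (i + 1))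
    + (s ^ 2)⁻¹ • Eunit F n (pr n i) (pr n i)
    + ∑ j ∈ ((((Icc 1 (2 * n + 1)).erase i).erase (i + 1)).erase (pr n (i + 1))).erase (pr n i),
        Eunit F n j j

/-- The standard basis vector `e_a` of `F^N` (1-based index). -/
def ebas (F : Type*) [Field F] (n a : ℕ) : Fin (2 * n + 1) → F :=
  fun i => if (i : ℕ) + 1 = a then 1 else 0

/-- The vector `w₀ = Σ_{i=1}^{N} (u v⁻¹)^{m_i} e_{i'} ⊗ e_i ∈ F^N ⊗ F^N`. -/
noncomputable def w0 (F : Type*) [Field F] (n : ℕ) (u v : F) :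
    Fin (2 * n + 1) × Fin (2 * n + 1) → F :=
  fun q => ∑ i ∈ Icc 1 (2 * n + 1),
    (u * v⁻¹) ^ (mwt n i) * ebas F n (pr n i) q.1 * ebas F n i q.2

/-! ### Coordinates of `w₀` and eigenvalues of `Ω_i` -/

/-- The coordinate of `w₀` at `(a, b)`, as a function of 1-based indices. -/
noncomputable def wCoord {F : Type*} [Field F] (n : ℕ) (q : F) (a b : ℕ) : F :=
  if a + b = 2 * n + 2 then q ^ mwt n b else 0

/-- The eigenvalue of `Ω_i` on `e_k`, for 1-based `k`. -/
noncomputable def omCoord {F : Type*} [Field F] (n : ℕ) (r s : F) (i k : ℕ) : F :=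
  if i = n then
    if k < n then (r * s)⁻¹ else if k = n then r * s⁻¹ else if k = n + 1 then 1
    else if k = n + 2 then r⁻¹ * s else r * s
  else
    if k = i then r ^ 2 else if k = i + 1 then s ^ 2 else if k + i + 1 = 2 * n + 2 then (s ^ 2)⁻¹
    else if k + i = 2 * n + 2 then (r ^ 2)⁻¹ else 1

lemma w0_apply {F : Type*} [Field F] (n : ℕ) (u v : F) (a b : Fin (2 * n + 1)) :
    w0 F n u v (a, b) = wCoord n (u * v⁻¹) (a + 1) (b + 1) := by
  have ha := a.2
  have hb := b.2
  unfold w0 wCoord ebas pr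
  rw [Finset.sum_eq_single ((b : ℕ) + 1)]
  · by_cases h : (a : ℕ) + 1 + (b + 1) = 2 * n + 2
    · have h' : (a : ℕ) + 1 = 2 * n + 2 - (b + 1) := by omega
      rw [if_pos h, if_pos h', if_pos rfl]
      simp
    · have h' : ¬ (a : ℕ) + 1 = 2 * n + 2 - (b + 1) := by omega
      rw [if_neg h, if_neg h']
      simp
  · intro k _ hk
    simp [Ne.symm hk]
  · intro h
    exact absurd (Finset.mem_Icc.mpr (by omega)) h

lemma Eunit_sum_apply {F : Type*} [Field F] (n : ℕ) (S : Finset ℕ) (a b : Fin (2 * n + 1)) :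
    (∑ j ∈ S, Eunit F n j j) a b = if a = b ∧ (a : ℕ) + 1 ∈ S then 1 else 0 := by
  rw [Matrix.sum_apply]
  by_cases hab : a = b
  · subst hab
    simp [Eunit]
  · have : (a : ℕ) ≠ b := fun h => hab (Fin.ext h)
    simp only [hab, false_and, if_false]
    refine Finset.sum_eq_zero fun k _ => ?_
    simp only [Eunit, Matrix.of_apply]
    exact if_neg (by omega)

lemma Om_eq_diagonal {F : Type*} [Field F] (n : ℕ) (r s : F) (i : ℕ) (hi : 1 ≤ i) (hin : i ≤ n) :
    Om F n r s i = Matrix.diagonal fun k : Fin (2 * n + 1) => omCoord n r s i (k + 1) := by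
  ext a b
  have ha := a.2
  have hb := b.2
  by_cases hab : a = b
  · subst hab
    rw [Matrix.diagonal_apply_eq]
    unfold Om omCoord
    by_cases h : i = n
    · simp only [h, if_true, Matrix.add_apply, Matrix.smul_apply, Eunit_sum_apply]
      simp only [Eunit, Matrix.of_apply, pr, and_self, true_and, Finset.mem_Icc, smul_eq_mul]
      split_ifs <;> first | omega | simp
    · simp only [h, if_false, Matrix.add_apply, Matrix.smul_apply, Eunit_sum_apply]
      simp only [Eunit, Matrix.of_apply, pr, and_self, true_and, Finset.mem_Icc, Finset.mem_erase,
        smul_eq_mul]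
      split_ifs <;> first | omega | simp
  · have : (a : ℕ) ≠ b := fun h => hab (Fin.ext h)
    rw [Matrix.diagonal_apply_ne _ hab]
    have hE : ∀ k, Eunit F n k k a b = 0 := fun k => by
      simp only [Eunit, Matrix.of_apply]
      exact if_neg (by omega)
    unfold Om
    split_ifs <;> simp [Matrix.add_apply, Eunit_sum_apply, hE, hab]

/-- Exchanging `r` and `s` turns `Ω_i` into `Ω'_i`, so facts about `Ω_i` transfer to `Ω'_i`. -/
lemma Om'_eq_Om_swap {F : Type*} [Field F] (n : ℕ) (r s : F) (i : ℕ) :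
    Om' F n r s i = Om F n s r i := by
  simp only [Om', Om, mul_comm]

/-! ### Action of Kronecker products on `w₀` -/

lemma Eunit_kronecker_diagonal_mulVec {F : Type*} [Field F] (n : ℕ) (u v : F)
    (d : Fin (2 * n + 1) → F) {x y : ℕ} (hy : 1 ≤ y) (hy' : y ≤ 2 * n + 1)
    (a b : Fin (2 * n + 1)) :
    ((Eunit F n x y ⊗ₖ Matrix.diagonal d) *ᵥ w0 F n u v) (a, b) =
      if (a : ℕ) + 1 = x then d b * wCoord n (u * v⁻¹) y (b + 1) else 0 := by
  rw [Matrix.mulVec, dotProduct, Finset.sum_eq_single (⟨y - 1, by omega⟩, b)]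
  · simp [Matrix.kroneckerMap_apply, Eunit, w0_apply, Nat.sub_add_cancel hy]
  · rintro ⟨k, l⟩ _ hkl
    by_cases hl : b = l
    · subst hl
      have : ¬ (k : ℕ) + 1 = y := fun h => hkl (by ext <;> simp; omega)
      simp [Matrix.kroneckerMap_apply, Eunit, this]
    · simp [Matrix.kroneckerMap_apply, Matrix.diagonal_apply_ne _ hl]
  · simp

lemma diagonal_kronecker_Eunit_mulVec {F : Type*} [Field F] (n : ℕ) (u v : F)
    (d : Fin (2 * n + 1) → F) {x y : ℕ} (hy : 1 ≤ y) (hy' : y ≤ 2 * n + 1)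
    (a b : Fin (2 * n + 1)) :
    ((Matrix.diagonal d ⊗ₖ Eunit F n x y) *ᵥ w0 F n u v) (a, b) =
      if (b : ℕ) + 1 = x then d a * wCoord n (u * v⁻¹) (a + 1) y else 0 := by
  rw [Matrix.mulVec, dotProduct, Finset.sum_eq_single (a, ⟨y - 1, by omega⟩)]
  · simp [Matrix.kroneckerMap_apply, Eunit, w0_apply, Nat.sub_add_cancel hy]
  · rintro ⟨k, l⟩ _ hkl
    by_cases hk : a = k
    · subst hk
      have : ¬ (l : ℕ) + 1 = y := fun h => hkl (by ext <;> simp; omega)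
      simp [Matrix.kroneckerMap_apply, Eunit, this]
    · simp [Matrix.kroneckerMap_apply, Matrix.diagonal_apply_ne _ hk]
  · simp

/-- The eigenvalues of `Ω_i` on `e_k` and `e_{k'}` are mutually inverse. -/
lemma omCoord_mul_omCoord {F : Type*} [Field F] (n : ℕ) (r s : F) (hr : r ≠ 0) (hs : s ≠ 0)
    (i k l : ℕ) (hin : i ≤ n) (h : k + l = 2 * n + 2) :
    omCoord n r s i k * omCoord n r s i l = 1 := by
  unfold omCoord
  split_ifs <;> first | omega | field_simp

lemma Om_kronecker_Om_mulVec {F : Type*} [Field F] (n : ℕ) (u v r s : F) (hr : r ≠ 0)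
    (hs : s ≠ 0) (i : ℕ) (hi : 1 ≤ i) (hin : i ≤ n) :
    (Om F n r s i ⊗ₖ Om F n r s i) *ᵥ w0 F n u v = w0 F n u v := by
  rw [Om_eq_diagonal n r s i hi hin, Matrix.diagonal_kronecker_diagonal]
  ext ⟨a, b⟩
  rw [Matrix.mulVec_diagonal, w0_apply]
  by_cases h : (a : ℕ) + 1 + (b + 1) = 2 * n + 2
  · rw [omCoord_mul_omCoord n r s hr hs i _ _ hin h, one_mul]
  · simp [wCoord, h]

/-! ### Cancellation in each coordinate -/

lemma ite_wCoord_eq_zero {F : Type*} [Field F] {n a b : ℕ} {p : Prop} [Decidable p] {x q : F}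
    (h : p → a + b ≠ 2 * n + 2) : (if p then x * wCoord n q a b else 0) = 0 := by
  split_ifs with hp
  · simp [wCoord, h hp]
  · rfl

lemma kronecker_sub' {F : Type*} [Field F] {ι : Type*} (A B C : Matrix ι ι F) :
    A ⊗ₖ (B - C) = A ⊗ₖ B - A ⊗ₖ C := by
  ext
  simp [Matrix.kroneckerMap_apply, mul_sub]

lemma sub_kronecker' {F : Type*} [Field F] {ι : Type*} (A B C : Matrix ι ι F) :
    (A - B) ⊗ₖ C = A ⊗ₖ C - B ⊗ₖ C := by
  ext
  simp [Matrix.kroneckerMap_apply, sub_mul]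

/-- The `(A, B)` coordinate of `(E_n ⊗ 1 + Ω_n ⊗ E_n) w₀` vanishes. -/
lemma E_coord_last {F : Type*} [Field F] {n : ℕ} {u v w r s : F} (hn : 1 ≤ n)
    (hu : u ≠ 0) (hv : v ≠ 0) (hr : r = u ^ 2) (hs : s = v ^ 2) {A B : ℕ}
    (hA : 1 ≤ A ∧ A ≤ 2 * n + 1) (hB : 1 ≤ B ∧ B ≤ 2 * n + 1) :
    w * ((u * v)⁻¹ * (if A = n then 1 * wCoord n (u * v⁻¹) (n + 1) B else 0) -
        r⁻¹ * if A = n + 1 then 1 * wCoord n (u * v⁻¹) (pr n n) B else 0) +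
      w * ((u * v)⁻¹ * (if B = n then omCoord n r s n A * wCoord n (u * v⁻¹) A (n + 1) else 0) -
        r⁻¹ * if B = n + 1 then omCoord n r s n A * wCoord n (u * v⁻¹) A (pr n n) else 0) = 0 := by
  have hq : u * v⁻¹ ≠ 0 := mul_ne_zero hu (inv_ne_zero hv)
  subst hr hs
  by_cases h : A = n ∧ B = n + 1
  · obtain ⟨hA', hB'⟩ := h
    subst A B
    have hm : mwt n (n + 1) = mwt n (pr n n) + 1 := by
      unfold mwt
      split_ifs <;> (unfold pr at *; omega)
    have e : (u * v⁻¹) ^ mwt n (n + 1) = (u * v⁻¹) ^ mwt n (pr n n) * (u * v⁻¹) ^ 1 := by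
      rw [hm, zpow_add₀ hq]
      norm_cast
    have ho : omCoord n (u ^ 2) (v ^ 2) n n = (u ^ 2) * (v ^ 2)⁻¹ := by
      unfold omCoord
      split_ifs <;> first | rfl | (unfold pr at *; omega)
    unfold wCoord
    rw [ho]
    split_ifs <;> try (unfold pr at *; omega)
    rw [e]
    field_simp
    ring
  by_cases h : A = n + 1 ∧ B = n
  · obtain ⟨hA', hB'⟩ := h
    subst A B
    have hm : mwt n n = mwt n (n + 1) + 1 := by
      unfold mwt
      split_ifs <;> (unfold pr at *; omega)
    have e : (u * v⁻¹) ^ mwt n n = (u * v⁻¹) ^ mwt n (n + 1) * (u * v⁻¹) ^ 1 := by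
      rw [hm, zpow_add₀ hq]
      norm_cast
    have ho : omCoord n (u ^ 2) (v ^ 2) n (n + 1) = 1 := by
      unfold omCoord
      split_ifs <;> first | rfl | (unfold pr at *; omega)
    unfold wCoord
    rw [ho]
    split_ifs <;> try (unfold pr at *; omega)
    rw [e]
    field_simp
    ring
  unfold pr at *
  rw [ite_wCoord_eq_zero, ite_wCoord_eq_zero, ite_wCoord_eq_zero, ite_wCoord_eq_zero]
  · simp
  all_goals omega

/-- The `(A, B)` coordinate of `(E_j ⊗ 1 + Ω_j ⊗ E_j) w₀` vanishes, for `j < n`. -/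
lemma E_coord {F : Type*} [Field F] {n j : ℕ} {u v r s : F} (hjn : j < n)
    (hu : u ≠ 0) (hv : v ≠ 0) (hr : r = u ^ 2) (hs : s = v ^ 2) {A B : ℕ}
    (hA : 1 ≤ A ∧ A ≤ 2 * n + 1) (hB : 1 ≤ B ∧ B ≤ 2 * n + 1) :
    (if A = j then 1 * wCoord n (u * v⁻¹) (j + 1) B else 0) -
        (r * s)⁻¹ * (if A = pr n (j + 1) then 1 * wCoord n (u * v⁻¹) (pr n j) B else 0) +
      ((if B = j then omCoord n r s j A * wCoord n (u * v⁻¹) A (j + 1) else 0) -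
        (r * s)⁻¹ * if B = pr n (j + 1) then
          omCoord n r s j A * wCoord n (u * v⁻¹) A (pr n j) else 0) = 0 := by
  have hq : u * v⁻¹ ≠ 0 := mul_ne_zero hu (inv_ne_zero hv)
  subst hr hs
  by_cases h : A = j ∧ B = pr n (j + 1)
  · obtain ⟨hA', hB'⟩ := h
    subst A B
    have hm : mwt n (pr n (j + 1)) = mwt n (pr n j) + 2 := by
      unfold mwt
      split_ifs <;> (unfold pr at *; omega)
    have e : (u * v⁻¹) ^ mwt n (pr n (j + 1)) = (u * v⁻¹) ^ mwt n (pr n j) * (u * v⁻¹) ^ 2 := by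
      rw [hm, zpow_add₀ hq]
      norm_cast
    have ho : omCoord n (u ^ 2) (v ^ 2) j j = (u ^ 2) ^ 2 := by
      unfold omCoord
      split_ifs <;> first | rfl | (unfold pr at *; omega)
    unfold wCoord
    rw [ho]
    split_ifs <;> try (unfold pr at *; omega)
    rw [e]
    field_simp
    ring
  by_cases h : A = pr n (j + 1) ∧ B = j
  · obtain ⟨hA', hB'⟩ := h
    subst A B
    have hm : mwt n j = mwt n (j + 1) + 2 := by
      unfold mwt
      split_ifs <;> (unfold pr at *; omega)
    have e : (u * v⁻¹) ^ mwt n j = (u * v⁻¹) ^ mwt n (j + 1) * (u * v⁻¹) ^ 2 := by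
      rw [hm, zpow_add₀ hq]
      norm_cast
    have ho : omCoord n (u ^ 2) (v ^ 2) j (pr n (j + 1)) = ((v ^ 2) ^ 2)⁻¹ := by
      unfold omCoord
      split_ifs <;> first | rfl | (unfold pr at *; omega)
    unfold wCoord
    rw [ho]
    split_ifs <;> try (unfold pr at *; omega)
    rw [e]
    field_simp
    ring
  unfold pr at *
  rw [ite_wCoord_eq_zero, ite_wCoord_eq_zero, ite_wCoord_eq_zero, ite_wCoord_eq_zero]
  · simp
  all_goals omega

/-- The `(A, B)` coordinate of `(1 ⊗ F_n + F_n ⊗ Ω'_n) w₀` vanishes. -/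
lemma F_coord_last {F : Type*} [Field F] {n : ℕ} {u v w r s : F} (hn : 1 ≤ n)
    (hu : u ≠ 0) (hv : v ≠ 0) (hr : r = u ^ 2) (hs : s = v ^ 2) {A B : ℕ}
    (hA : 1 ≤ A ∧ A ≤ 2 * n + 1) (hB : 1 ≤ B ∧ B ≤ 2 * n + 1) :
    w * ((u * v)⁻¹ * (if B = n + 1 then 1 * wCoord n (u * v⁻¹) A n else 0) -
        s⁻¹ * if B = pr n n then 1 * wCoord n (u * v⁻¹) A (n + 1) else 0) +
      w * ((u * v)⁻¹ * (if A = n + 1 then omCoord n s r n B * wCoord n (u * v⁻¹) n B else 0) -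
        s⁻¹ * if A = pr n n then omCoord n s r n B * wCoord n (u * v⁻¹) (n + 1) B else 0) = 0 := by
  have hq : u * v⁻¹ ≠ 0 := mul_ne_zero hu (inv_ne_zero hv)
  subst hr hs
  by_cases h : A = pr n n ∧ B = n + 1
  · obtain ⟨hA', hB'⟩ := h
    subst A B
    have hm : mwt n n = mwt n (n + 1) + 1 := by
      unfold mwt
      split_ifs <;> (unfold pr at *; omega)
    have e : (u * v⁻¹) ^ mwt n n = (u * v⁻¹) ^ mwt n (n + 1) * (u * v⁻¹) ^ 1 := by
      rw [hm, zpow_add₀ hq]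
      norm_cast
    have ho : omCoord n (v ^ 2) (u ^ 2) n (n + 1) = 1 := by
      unfold omCoord
      split_ifs <;> first | rfl | (unfold pr at *; omega)
    unfold wCoord
    rw [ho]
    split_ifs <;> try (unfold pr at *; omega)
    rw [e]
    field_simp
    ring
  by_cases h : A = n + 1 ∧ B = pr n n
  · obtain ⟨hA', hB'⟩ := h
    subst A B
    have hm : mwt n (n + 1) = mwt n (pr n n) + 1 := by
      unfold mwt
      split_ifs <;> (unfold pr at *; omega)
    have e : (u * v⁻¹) ^ mwt n (n + 1) = (u * v⁻¹) ^ mwt n (pr n n) * (u * v⁻¹) ^ 1 := by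
      rw [hm, zpow_add₀ hq]
      norm_cast
    have ho : omCoord n (v ^ 2) (u ^ 2) n (pr n n) = (v ^ 2)⁻¹ * (u ^ 2) := by
      unfold omCoord
      split_ifs <;> first | rfl | (unfold pr at *; omega)
    unfold wCoord
    rw [ho]
    split_ifs <;> try (unfold pr at *; omega)
    rw [e]
    field_simp
    ring
  unfold pr at *
  rw [ite_wCoord_eq_zero, ite_wCoord_eq_zero, ite_wCoord_eq_zero, ite_wCoord_eq_zero]
  · simp
  all_goals omega

/-- The `(A, B)` coordinate of `(1 ⊗ F_j + F_j ⊗ Ω'_j) w₀` vanishes, for `j < n`. -/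
lemma F_coord {F : Type*} [Field F] {n j : ℕ} {u v r s : F} (hjn : j < n)
    (hu : u ≠ 0) (hv : v ≠ 0) (hr : r = u ^ 2) (hs : s = v ^ 2) {A B : ℕ}
    (hA : 1 ≤ A ∧ A ≤ 2 * n + 1) (hB : 1 ≤ B ∧ B ≤ 2 * n + 1) :
    (if B = j + 1 then 1 * wCoord n (u * v⁻¹) A j else 0) -
        (r * s)⁻¹ * (if B = pr n j then 1 * wCoord n (u * v⁻¹) A (pr n (j + 1)) else 0) +
      ((if A = j + 1 then omCoord n s r j B * wCoord n (u * v⁻¹) j B else 0) -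
        (r * s)⁻¹ * if A = pr n j then
          omCoord n s r j B * wCoord n (u * v⁻¹) (pr n (j + 1)) B else 0) = 0 := by
  have hq : u * v⁻¹ ≠ 0 := mul_ne_zero hu (inv_ne_zero hv)
  subst hr hs
  by_cases h : A = pr n j ∧ B = j + 1
  · obtain ⟨hA', hB'⟩ := h
    subst A B
    have hm : mwt n j = mwt n (j + 1) + 2 := by
      unfold mwt
      split_ifs <;> (unfold pr at *; omega)
    have e : (u * v⁻¹) ^ mwt n j = (u * v⁻¹) ^ mwt n (j + 1) * (u * v⁻¹) ^ 2 := by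
      rw [hm, zpow_add₀ hq]
      norm_cast
    have ho : omCoord n (v ^ 2) (u ^ 2) j (j + 1) = (u ^ 2) ^ 2 := by
      unfold omCoord
      split_ifs <;> first | rfl | (unfold pr at *; omega)
    unfold wCoord
    rw [ho]
    split_ifs <;> try (unfold pr at *; omega)
    rw [e]
    field_simp
    ring
  by_cases h : A = j + 1 ∧ B = pr n j
  · obtain ⟨hA', hB'⟩ := h
    subst A B
    have hm : mwt n (pr n (j + 1)) = mwt n (pr n j) + 2 := by
      unfold mwt
      split_ifs <;> (unfold pr at *; omega)
    have e : (u * v⁻¹) ^ mwt n (pr n (j + 1)) = (u * v⁻¹) ^ mwt n (pr n j) * (u * v⁻¹) ^ 2 := by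
      rw [hm, zpow_add₀ hq]
      norm_cast
    have ho : omCoord n (v ^ 2) (u ^ 2) j (pr n j) = ((v ^ 2) ^ 2)⁻¹ := by
      unfold omCoord
      split_ifs <;> first | rfl | (unfold pr at *; omega)
    unfold wCoord
    rw [ho]
    split_ifs <;> try (unfold pr at *; omega)
    rw [e]
    field_simp
    ring
  unfold pr at *
  rw [ite_wCoord_eq_zero, ite_wCoord_eq_zero, ite_wCoord_eq_zero, ite_wCoord_eq_zero]
  · simp
  all_goals omega

/-- **Lemma 3.5.** The vector `w₀` spans the trivial one-dimensional summand of `V ⊗ V`: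
for every `1 ≤ j ≤ n`, `(E_j ⊗ I + Ω_j ⊗ E_j) w₀ = 0`, `(I ⊗ F_j + F_j ⊗ Ω'_j) w₀ = 0`,
`(Ω_j ⊗ Ω_j) w₀ = w₀` and `(Ω'_j ⊗ Ω'_j) w₀ = w₀`. -/
theorem lemma_3_5 (n : ℕ) (hn : 1 ≤ n)
    (F : Type*) [Field F] (u v w r s : F)
    (hu : u ≠ 0) (hv : v ≠ 0) (hw : w ≠ 0)
    (hr : r = u ^ 2) (hs : s = v ^ 2) (hw2 : w ^ 2 = r + s) (hrs : r ^ 2 ≠ s ^ 2) :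
    ∀ j : ℕ, 1 ≤ j → j ≤ n →
      (Emat F n u v w r s j ⊗ₖ (1 : Matrix (Fin (2 * n + 1)) (Fin (2 * n + 1)) F)
          + Om F n r s j ⊗ₖ Emat F n u v w r s j) *ᵥ w0 F n u v = 0 ∧
      ((1 : Matrix (Fin (2 * n + 1)) (Fin (2 * n + 1)) F) ⊗ₖ Fmat F n u v w r s j
          + Fmat F n u v w r s j ⊗ₖ Om' F n r s j) *ᵥ w0 F n u v = 0 ∧
      (Om F n r s j ⊗ₖ Om F n r s j) *ᵥ w0 F n u v = w0 F n u v ∧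
      (Om' F n r s j ⊗ₖ Om' F n r s j) *ᵥ w0 F n u v = w0 F n u v := by
  intro j hj hjn
  have hr0 : r ≠ 0 := by rw [hr]; exact pow_ne_zero 2 hu
  have hs0 : s ≠ 0 := by rw [hs]; exact pow_ne_zero 2 hv
  rw [Om'_eq_Om_swap]
  refine ⟨?_, ?_, Om_kronecker_Om_mulVec n u v r s hr0 hs0 j hj hjn,
    Om_kronecker_Om_mulVec n u v s r hs0 hr0 j hj hjn⟩
  · rw [Om_eq_diagonal n r s j hj hjn, ← Matrix.diagonal_one]
    ext ⟨a, b⟩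
    have ha := a.2
    have hb := b.2
    unfold Emat
    by_cases h : j = n
    · subst h
      simp only [if_true, kronecker_sub', sub_kronecker', Matrix.smul_kronecker,
        Matrix.kronecker_smul, Matrix.add_mulVec, Matrix.sub_mulVec, Matrix.smul_mulVec,
        Pi.add_apply, Pi.sub_apply, Pi.smul_apply, smul_eq_mul, Pi.zero_apply]
      rw [Eunit_kronecker_diagonal_mulVec, Eunit_kronecker_diagonal_mulVec,
        diagonal_kronecker_Eunit_mulVec, diagonal_kronecker_Eunit_mulVec] <;>
        first | omega | (unfold pr; omega) | skip
      exact E_coord_last hj hu hv hr hs (by omega) (by omega)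
    · simp only [h, if_false, kronecker_sub', sub_kronecker', Matrix.smul_kronecker,
        Matrix.kronecker_smul, Matrix.add_mulVec, Matrix.sub_mulVec, Matrix.smul_mulVec,
        Pi.add_apply, Pi.sub_apply, Pi.smul_apply, smul_eq_mul, Pi.zero_apply]
      rw [Eunit_kronecker_diagonal_mulVec, Eunit_kronecker_diagonal_mulVec,
        diagonal_kronecker_Eunit_mulVec, diagonal_kronecker_Eunit_mulVec] <;>
        first | omega | (unfold pr; omega) | skip
      exact E_coord (by omega) hu hv hr hs (by omega) (by omega)
  · rw [Om_eq_diagonal n s r j hj hjn, ← Matrix.diagonal_one]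
    ext ⟨a, b⟩
    have ha := a.2
    have hb := b.2
    unfold Fmat
    by_cases h : j = n
    · subst h
      simp only [if_true, kronecker_sub', sub_kronecker', Matrix.smul_kronecker,
        Matrix.kronecker_smul, Matrix.add_mulVec, Matrix.sub_mulVec, Matrix.smul_mulVec,
        Pi.add_apply, Pi.sub_apply, Pi.smul_apply, smul_eq_mul, Pi.zero_apply]
      rw [diagonal_kronecker_Eunit_mulVec, diagonal_kronecker_Eunit_mulVec,
        Eunit_kronecker_diagonal_mulVec, Eunit_kronecker_diagonal_mulVec] <;>
        first | omega | (unfold pr; omega) | skip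
      exact F_coord_last hj hu hv hr hs (by omega) (by omega)
    · simp only [h, if_false, kronecker_sub', sub_kronecker', Matrix.smul_kronecker,
        Matrix.kronecker_smul, Matrix.add_mulVec, Matrix.sub_mulVec, Matrix.smul_mulVec,
        Pi.add_apply, Pi.sub_apply, Pi.smul_apply, smul_eq_mul, Pi.zero_apply]
      rw [diagonal_kronecker_Eunit_mulVec, diagonal_kronecker_Eunit_mulVec,
        Eunit_kronecker_diagonal_mulVec, Eunit_kronecker_diagonal_mulVec] <;>
        first | omega | (unfold pr; omega) | skip
      exact F_coord (by omega) hu hv hr hs (by omega) (by omega)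
end

section
/- The matrix R satisfies the cubic equation (R − r⁻¹s·1)·(R + rs⁻¹·1)·(R − (rs⁻¹)^{2n}·1) = 0, where 1 denotes the N²×N² identity matrix. (Lemma 3.8: R is annihilated by its minimal polynomial (t − r⁻¹s)(t + rs⁻¹)(t − r^{2n}s^{−2n}).) -/
/-!
Put `q = r⁻¹s - rs⁻¹` and `λ = (rs⁻¹)^{2n}`, and let `R` act on vectors. The matrix `R` preserves
the span of `e_a ⊗ e_c` and `e_c ⊗ e_a` when `c ≠ a'`. For `a ≠ c` the block there has
off-diagonal entries with product `1` (`flipCoeff_mul`) and diagonal entries `0` and `q`; for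
`a = c` it is the scalar `r⁻¹s`. Both satisfy `X² = qX + 1`, that is,
`(X - r⁻¹s)(X + rs⁻¹) = 0`.

The remaining block `M` (`blk`), on the vectors `e_a ⊗ e_{a'}`, is governed by the weight vector
`u_a = t^{m_a}`. Two identities hold:

* `M² = qM + 1 - qλ u uᵀ` (`blk_sq`): the quadratic relation fails by a rank one term;
* `uᵀ M = λ uᵀ` (`wt_vecMul_blk`).

Both reduce to the evaluation of the partial sums of `u_b²`, which are geometric and telescope after
multiplication by `q` (`sum_wt_sq`). Consequently `(R - r⁻¹s)(R + rs⁻¹)` vanishes on every vector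
whose component in this block is orthogonal to `u` (`Rmat_quadratic`), and the range of `R - λ`
consists of such vectors.
-/

open Matrix Finset
open scoped Kronecker

/-- The matrix `K = Σ_{i,j} t^{m_i−m_j} E_{i,j'} ⊗ E_{i',j}`. -/
noncomputable def Kmat (F : Type*) [Field F] (n : ℕ) (t : F) :
    Matrix (Fin (2 * n + 1) × Fin (2 * n + 1)) (Fin (2 * n + 1) × Fin (2 * n + 1)) F :=
  ∑ i ∈ Icc 1 (2 * n + 1), ∑ j ∈ Icc 1 (2 * n + 1),
    t ^ (mwt n i - mwt n j) • (Eunit F n i (pr n j) ⊗ₖ Eunit F n (pr n i) j)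

/-- The basic braided `R`-matrix of `U_{r,s}(so_{2n+1})` (Theorem 3.7). -/
noncomputable def Rmat (F : Type*) [Field F] (n : ℕ) (r s t : F) :
    Matrix (Fin (2 * n + 1) × Fin (2 * n + 1)) (Fin (2 * n + 1) × Fin (2 * n + 1)) F :=
  (r⁻¹ * s) • (∑ i ∈ (Icc 1 (2 * n + 1)).erase (n + 1), Eunit F n i i ⊗ₖ Eunit F n i i)
  + (r⁻¹ * s⁻¹) • (
      (∑ i ∈ Icc 1 n, ∑ j ∈ Icc (i + 1) n, Eunit F n i j ⊗ₖ Eunit F n j i)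
    + (∑ i ∈ Icc 2 n, ∑ j ∈ Icc (pr n (i - 1)) (pr n 1), Eunit F n i j ⊗ₖ Eunit F n j i)
    + (∑ i ∈ Icc 1 (n - 1), ∑ j ∈ Icc (pr n n) (pr n (i + 1)), Eunit F n j i ⊗ₖ Eunit F n i j)
    + (∑ i ∈ Icc (pr n n) (pr n 2), ∑ j ∈ Icc (i + 1) (pr n 1), Eunit F n j i ⊗ₖ Eunit F n i j))
  + (r * s) • (
      (∑ i ∈ Icc 1 n, ∑ j ∈ Icc (i + 1) n, Eunit F n j i ⊗ₖ Eunit F n i j)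
    + (∑ i ∈ Icc (pr n n) (pr n 2), ∑ j ∈ Icc (i + 1) (pr n 1), Eunit F n i j ⊗ₖ Eunit F n j i)
    + (∑ i ∈ Icc 2 n, ∑ j ∈ Icc (pr n (i - 1)) (pr n 1), Eunit F n j i ⊗ₖ Eunit F n i j)
    + (∑ i ∈ Icc 1 (n - 1), ∑ j ∈ Icc (pr n n) (pr n (i + 1)), Eunit F n i j ⊗ₖ Eunit F n j i))
  + (∑ i ∈ (Icc 1 (2 * n + 1)).erase (n + 1), Eunit F n i (n + 1) ⊗ₖ Eunit F n (n + 1) i)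
  + (∑ j ∈ (Icc 1 (2 * n + 1)).erase (n + 1), Eunit F n (n + 1) j ⊗ₖ Eunit F n j (n + 1))
  + (r * s⁻¹) • (∑ i ∈ (Icc 1 (2 * n + 1)).erase (n + 1), Eunit F n (pr n i) i ⊗ₖ Eunit F n i (pr n i))
  + (r⁻¹ * s - r * s⁻¹) • (
      (∑ i ∈ Icc 1 (2 * n + 1), ∑ j ∈ Icc 1 (i - 1), Eunit F n i i ⊗ₖ Eunit F n j j)
    - (∑ i ∈ Icc 1 (2 * n + 1), ∑ j ∈ Icc 1 (i - 1),
        t ^ (mwt n i - mwt n j) • (Eunit F n i (pr n j) ⊗ₖ Eunit F n (pr n i) j)))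
  + Eunit F n (n + 1) (n + 1) ⊗ₖ Eunit F n (n + 1) (n + 1)

namespace BraidedR

variable {F : Type*} [Field F] {n : ℕ}

/-! ### Weights and their partial sums -/

/-- The weight `u_a = t^{m_a}`, with 0-based index `a`. -/
def wt (n : ℕ) (t : F) (a : Fin (2 * n + 1)) : F := t ^ mwt n (a + 1)

/-- The coefficient of the flip `E_{i,i'} ⊗ E_{i',i}` in `R`: `t⁻²`, except `1` at the middle
index. -/
def flipWt (n : ℕ) (t : F) (a : Fin (2 * n + 1)) : F := if (a : ℕ) = n then 1 else (t ^ 2)⁻¹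

lemma flipWt_rev (t : F) (a : Fin (2 * n + 1)) : flipWt n t a.rev = flipWt n t a := by
  unfold flipWt
  have := a.isLt
  have h : ((a.rev : ℕ) = n) ↔ ((a : ℕ) = n) := by rw [Fin.val_rev]; omega
  simp only [h]

lemma mwt_rev (a : Fin (2 * n + 1)) : mwt n (a.rev + 1) = - mwt n (a + 1) := by
  unfold mwt
  have := a.isLt
  rw [Fin.val_rev]
  split_ifs <;> omega

lemma wt_ne_zero {t : F} (ht : t ≠ 0) (a : Fin (2 * n + 1)) : wt n t a ≠ 0 :=
  zpow_ne_zero _ ht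

lemma wt_rev (t : F) (a : Fin (2 * n + 1)) : wt n t a.rev = (wt n t a)⁻¹ := by
  rw [wt, wt, mwt_rev, _root_.zpow_neg]

/-- The partial sums `Σ_{b > 2n - k} t^{2 m_b}` are geometric and telescope after multiplication
by `t² - t⁻²`; the jump at `k > n` comes from the middle index, where `m = 0`. -/
lemma sum_wt_sq_nat {t : F} (ht : t ≠ 0) (k : ℕ) (hk : k ≤ 2 * n) :
    (t ^ 2 - (t ^ 2)⁻¹) * ∑ b : Fin (2 * n + 1), (if 2 * n < b + k then wt n t b ^ 2 else 0) =
      (if k ≤ n then t ^ (4 * (k : ℤ) - 4 * n)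
        else t ^ (4 * (k : ℤ) - 4 * n - 4) + (t ^ 2 - (t ^ 2)⁻¹)) - ((t ^ 2)⁻¹) ^ (2 * n) := by
  induction k with
  | zero =>
    have h0 : ∀ b : Fin (2 * n + 1), ¬ (2 * n < (b : ℕ) + 0) := fun b => by omega
    have h1 : ((t ^ 2)⁻¹) ^ (2 * n) = t ^ (-4 * (n : ℤ)) := by
      rw [← zpow_natCast, ← zpow_natCast, ← _root_.zpow_neg, ← _root_.zpow_mul]
      congr 1; push_cast; ring
    rw [Finset.sum_eq_zero fun b _ => if_neg (h0 b)]
    simp [h1]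
  | succ k ih =>
    have hsplit : ∀ b : Fin (2 * n + 1), (if 2 * n < (b : ℕ) + (k + 1) then wt n t b ^ 2 else 0)
        = (if 2 * n < (b : ℕ) + k then wt n t b ^ 2 else 0)
          + (if b = (⟨2 * n - k, by omega⟩ : Fin (2 * n + 1)) then wt n t b ^ 2 else 0) := by
      intro b
      have hb : b = (⟨2 * n - k, by omega⟩ : Fin (2 * n + 1)) ↔ (b : ℕ) = 2 * n - k := by
        rw [Fin.ext_iff]
      simp only [hb]
      split_ifs <;> first | omega | simp
    simp only [hsplit, Finset.sum_add_distrib, Finset.sum_ite_eq', Finset.mem_univ, if_true]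
    have hsq : ∀ e : ℤ, (t ^ e) ^ 2 = t ^ (e * (2 : ℕ)) := fun e => by
      rw [← zpow_natCast, ← _root_.zpow_mul]
    rw [mul_add, ih (by omega), wt, hsq]
    have hq : t ^ 2 - (t ^ 2)⁻¹ = t ^ (2 : ℤ) - t ^ (-2 : ℤ) := by
      rw [_root_.zpow_neg]; norm_cast
    simp only [mwt]
    rw [hq]
    by_cases h1 : k + 1 ≤ n
    · rw [if_pos (by omega), if_neg (by omega), if_neg (by omega), if_pos h1, sub_mul,
        ← zpow_add₀ ht, ← zpow_add₀ ht]
      rw [show ((2 : ℤ) + (2 * (n : ℤ) + 3 - 2 * ((2 * n - k + 1 : ℕ) : ℤ)) * ((2 : ℕ) : ℤ))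
          = 4 * ((k + 1 : ℕ) : ℤ) - 4 * n by omega,
        show ((-2 : ℤ) + (2 * (n : ℤ) + 3 - 2 * ((2 * n - k + 1 : ℕ) : ℤ)) * ((2 : ℕ) : ℤ))
          = 4 * (k : ℤ) - 4 * n by omega]
      ring
    · by_cases h2 : k = n
      · subst h2
        rw [if_pos le_rfl, if_neg (by omega), if_pos (by omega), if_neg (by omega)]
        rw [show 4 * (k : ℤ) - 4 * k = 0 by ring,
          show 4 * ((k + 1 : ℕ) : ℤ) - 4 * k - 4 = 0 by push_cast; ring]
        simp
        ring
      · rw [if_neg (by omega), if_pos (by omega), if_neg (by omega), sub_mul,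
          ← zpow_add₀ ht, ← zpow_add₀ ht]
        rw [show ((2 : ℤ) + (2 * (n : ℤ) + 1 - 2 * ((2 * n - k + 1 : ℕ) : ℤ)) * ((2 : ℕ) : ℤ))
            = 4 * ((k + 1 : ℕ) : ℤ) - 4 * n - 4 by omega,
          show ((-2 : ℤ) + (2 * (n : ℤ) + 1 - 2 * ((2 * n - k + 1 : ℕ) : ℤ)) * ((2 : ℕ) : ℤ))
            = 4 * (k : ℤ) - 4 * n - 4 by omega]
        ring

/-- The partial sums of `sum_wt_sq_nat` expressed through the flip weight, the form in which they
meet the other terms of the block. -/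
lemma sum_wt_sq {t : F} (ht : t ≠ 0) (a : Fin (2 * n + 1)) :
    (t ^ 2 - (t ^ 2)⁻¹) * ∑ b : Fin (2 * n + 1),
        (if 2 * n < (b : ℕ) + a then wt n t b ^ 2 else 0) =
      flipWt n t a * wt n t a.rev ^ 2 + (if n < (a : ℕ) then t ^ 2 - (t ^ 2)⁻¹ else 0)
        - ((t ^ 2)⁻¹) ^ (2 * n) := by
  have ha := a.isLt
  rw [sum_wt_sq_nat ht a (by omega)]
  congr 1
  have hsq : wt n t a.rev ^ 2 = t ^ (-2 * mwt n (a + 1)) := by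
    rw [wt, mwt_rev, ← zpow_natCast, ← _root_.zpow_mul]; congr 1; push_cast; ring
  have hinv : (t ^ 2)⁻¹ = t ^ (-2 : ℤ) := by rw [_root_.zpow_neg]; norm_cast
  rw [hsq, flipWt, mwt]
  rcases lt_trichotomy (a : ℕ) n with h | h | h
  · rw [if_pos (by omega), if_neg (by omega), if_pos (by omega), if_neg (by omega), hinv,
      ← zpow_add₀ ht, add_zero]
    congr 1; push_cast; ring
  · simp [h]
  · rw [if_neg (by omega), if_neg (by omega), if_neg (by omega), if_neg (by omega),
      if_pos (by omega)]
    congr 1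
    rw [hinv, ← zpow_add₀ ht]
    congr 1; push_cast; ring

/-! ### The exceptional block of `R` -/

/-- The block of `R` on the span of the vectors `e_a ⊗ e_{a'}`, in the basis indexed by `a`. -/
def blk (n : ℕ) (t : F) : Matrix (Fin (2 * n + 1)) (Fin (2 * n + 1)) F := Matrix.of fun a b =>
  (if b = a.rev then flipWt n t a else 0)
    + (if a = b then (if n < (a : ℕ) then t ^ 2 - (t ^ 2)⁻¹ else 0) else 0)
    - (if 2 * n < (a : ℕ) + b then (t ^ 2 - (t ^ 2)⁻¹) * wt n t a * wt n t b else 0)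

/-- The weight vector is a left eigenvector of the block, with eigenvalue `t^{-4n}`. -/
lemma wt_vecMul_blk {t : F} (ht : t ≠ 0) :
    wt n t ᵥ* blk n t = ((t ^ 2)⁻¹) ^ (2 * n) • wt n t := by
  funext c
  have hsum := sum_wt_sq ht c
  have hc := wt_ne_zero ht c
  simp only [Matrix.vecMul, dotProduct, blk, Matrix.of_apply, mul_sub, mul_add,
    Finset.sum_sub_distrib, Finset.sum_add_distrib, Pi.smul_apply, smul_eq_mul]
  have h1 : ∀ x : Fin (2 * n + 1), (c = x.rev) = (x = c.rev) := fun x => by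
    rw [eq_iff_iff]; constructor <;> (rintro rfl; simp)
  have h3 : (∑ x : Fin (2 * n + 1), wt n t x *
      (if 2 * n < (x : ℕ) + c then (t ^ 2 - (t ^ 2)⁻¹) * wt n t x * wt n t c else 0))
      = wt n t c * ((t ^ 2 - (t ^ 2)⁻¹) *
        ∑ b : Fin (2 * n + 1), (if 2 * n < (b : ℕ) + c then wt n t b ^ 2 else 0)) := by
    rw [Finset.mul_sum, Finset.mul_sum]
    refine Finset.sum_congr rfl fun x _ => ?_
    split_ifs <;> ring
  rw [h3, hsum]
  simp only [h1, mul_ite, mul_zero, Finset.sum_ite_eq', Finset.mem_univ, if_true, flipWt_rev]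
  rw [wt_rev]
  field_simp
  split_ifs <;> ring

/-- On the block, `R` satisfies its quadratic relation up to a rank one term. -/
lemma blk_sq {t : F} (ht : t ≠ 0) (a c : Fin (2 * n + 1)) :
    (blk n t * blk n t) a c = (t ^ 2 - (t ^ 2)⁻¹) * blk n t a c + (if a = c then 1 else 0)
      - (t ^ 2 - (t ^ 2)⁻¹) * ((t ^ 2)⁻¹) ^ (2 * n) * wt n t a * wt n t c := by
  -- A product of two truncated rank one terms is again one, truncated at `min a c`.
  have hinner : ∑ b : Fin (2 * n + 1), (if 2 * n < (a : ℕ) + b then wt n t b else 0) * blk n t b c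
      = (if 2 * n < (a : ℕ) + c.rev then wt n t c.rev * flipWt n t c else 0)
        + (if 2 * n < (a : ℕ) + c then
            wt n t c * (if n < (c : ℕ) then t ^ 2 - (t ^ 2)⁻¹ else 0) else 0)
        - wt n t c * ((t ^ 2 - (t ^ 2)⁻¹) * ∑ b : Fin (2 * n + 1),
            (if 2 * n < (b : ℕ) + (min a c : Fin (2 * n + 1)) then wt n t b ^ 2 else 0)) := by
    have h1 : ∀ x : Fin (2 * n + 1), (c = x.rev) = (x = c.rev) := fun x => by
      rw [eq_iff_iff]; constructor <;> (rintro rfl; simp)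
    have h3 : (∑ x : Fin (2 * n + 1), (if 2 * n < (a : ℕ) + x then wt n t x else 0) *
        (if 2 * n < (x : ℕ) + c then (t ^ 2 - (t ^ 2)⁻¹) * wt n t x * wt n t c else 0))
        = wt n t c * ((t ^ 2 - (t ^ 2)⁻¹) * ∑ b : Fin (2 * n + 1),
          (if 2 * n < (b : ℕ) + (min a c : Fin (2 * n + 1)) then wt n t b ^ 2 else 0)) := by
      rw [Finset.mul_sum, Finset.mul_sum]
      refine Finset.sum_congr rfl fun x _ => ?_
      have hm : ((min a c : Fin (2 * n + 1)) : ℕ) = min (a : ℕ) c := Fin.coe_min a c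
      rw [hm]
      split_ifs <;> first | omega | ring
    simp only [blk, Matrix.of_apply, mul_sub, mul_add, Finset.sum_sub_distrib,
      Finset.sum_add_distrib]
    rw [h3]
    simp only [h1, mul_ite, mul_zero, ite_mul, zero_mul, Finset.sum_ite_eq', Finset.mem_univ,
      if_true, flipWt_rev]
    split_ifs <;> rfl
  have hmul : (blk n t * blk n t) a c = flipWt n t a * blk n t a.rev c
      + (if n < (a : ℕ) then t ^ 2 - (t ^ 2)⁻¹ else 0) * blk n t a c
      - (t ^ 2 - (t ^ 2)⁻¹) * wt n t a *
        ∑ b : Fin (2 * n + 1), (if 2 * n < (a : ℕ) + b then wt n t b else 0) * blk n t b c := by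
    rw [Matrix.mul_apply, Finset.mul_sum]
    have hterm : ∀ b, blk n t a b * blk n t b c
        = (if b = a.rev then flipWt n t a * blk n t b c else 0)
          + (if a = b then (if n < (a : ℕ) then t ^ 2 - (t ^ 2)⁻¹ else 0) * blk n t b c else 0)
          - (t ^ 2 - (t ^ 2)⁻¹) * wt n t a *
            ((if 2 * n < (a : ℕ) + b then wt n t b else 0) * blk n t b c) := by
      intro b
      rw [blk, Matrix.of_apply, ← blk]
      split_ifs <;> ring
    simp only [hterm, Finset.sum_sub_distrib, Finset.sum_add_distrib, Finset.sum_ite_eq',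
      Finset.sum_ite_eq, Finset.mem_univ, if_true]
  rw [hmul, hinner, sum_wt_sq ht]
  have hua := wt_ne_zero ht a
  have huc := wt_ne_zero ht c
  have ha := a.isLt
  have hc := c.isLt
  have hrevc : (c = a.rev) ↔ (a : ℕ) + c = 2 * n := by rw [Fin.ext_iff, Fin.val_rev]; omega
  have hac : (a = c) ↔ (a : ℕ) = c := Fin.ext_iff
  have hrev2 : (a.rev = c) ↔ (a : ℕ) + c = 2 * n := by rw [Fin.ext_iff, Fin.val_rev]; omega
  simp only [blk, Matrix.of_apply, Fin.rev_rev, flipWt_rev, wt_rev]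
  have hrevval : (a.rev : ℕ) = 2 * n - a := by rw [Fin.val_rev]; omega
  have hcrevval : (c.rev : ℕ) = 2 * n - c := by rw [Fin.val_rev]; omega
  have e1 : (2 * n < (a.rev : ℕ) + c) ↔ (a : ℕ) < c := by omega
  have e2 : (2 * n < (a : ℕ) + c.rev) ↔ (c : ℕ) < a := by omega
  have e3 : (n < (a.rev : ℕ)) ↔ (a : ℕ) < n := by omega
  have e4 : (c = a) ↔ (a : ℕ) = c := by rw [eq_comm, hac]
  simp only [e1, e2, e3, e4, hrev2, hrevc, hac]
  generalize ((t ^ 2)⁻¹) ^ (2 * n) = lam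
  have hα : t ^ 2 ≠ 0 := pow_ne_zero 2 ht
  unfold flipWt
  clear hinner hmul
  generalize t ^ 2 = α at *
  -- Everything now depends only on the relative order of `a`, `c`, `n` and of `a + c`, `2n`.
  rcases lt_trichotomy (a : ℕ) c with h | h | h
  · rw [min_eq_left (Fin.le_def.2 h.le)]
    simp only [h, h.ne, h.not_gt, if_true, if_false]
    rcases lt_trichotomy (a : ℕ) n with h1 | h1 | h1
    · simp only [h1, h1.ne, h1.not_gt, if_true, if_false]
      split_ifs <;> first | (exfalso; omega) | (field_simp; ring)
    · simp only [h1, lt_irrefl, if_true, if_false]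
      split_ifs <;> first | (exfalso; omega) | (field_simp; ring)
    · simp only [h1, h1.ne', h1.not_gt, if_true, if_false]
      split_ifs <;> first | (exfalso; omega) | (field_simp; ring)
  · obtain rfl : a = c := Fin.ext h
    rw [min_self]
    rcases lt_trichotomy (a : ℕ) n with h1 | h1 | h1 <;>
    (split_ifs <;> first | (exfalso; omega) | (field_simp; ring))
  · rw [min_eq_right (Fin.le_def.2 h.le)]
    simp only [h, h.ne', h.not_gt, if_true, if_false]
    rcases lt_trichotomy (c : ℕ) n with h1 | h1 | h1
    · simp only [h1.ne, h1.not_gt, if_false]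
      split_ifs <;> first | (exfalso; omega) | (field_simp; ring)
    · simp only [h1, lt_irrefl, if_true, if_false]
      split_ifs <;> first | (exfalso; omega) | (field_simp; ring)
    · simp only [h1, h1.ne', if_true, if_false]
      split_ifs <;> first | (exfalso; omega) | (field_simp; ring)

/-! ### Entries of sums of tensor products of matrix units -/

section Entries

variable (a b c d : Fin (2 * n + 1))

lemma Eunit_kron (i j k l : ℕ) : (Eunit F n i j ⊗ₖ Eunit F n k l) (a, c) (b, d)
    = if (a : ℕ) + 1 = i ∧ (b : ℕ) + 1 = j ∧ (c : ℕ) + 1 = k ∧ (d : ℕ) + 1 = l then 1 else 0 := by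
  simp only [Matrix.kroneckerMap_apply, Eunit, Matrix.of_apply]
  split_ifs <;> first | simp; done | (exfalso; tauto)

lemma sum_flip (S : Finset ℕ) (f : ℕ → ℕ) :
    (∑ i ∈ S, Eunit F n i (f i) ⊗ₖ Eunit F n (f i) i) (a, c) (b, d)
    = if b = c ∧ d = a then (if (a : ℕ) + 1 ∈ S ∧ (c : ℕ) + 1 = f (a + 1) then 1 else 0)
      else 0 := by
  simp only [Matrix.sum_apply, Eunit_kron, Fin.ext_iff]
  by_cases ha : (a : ℕ) + 1 ∈ S
  · rw [Finset.sum_eq_single_of_mem _ ha fun i _ hi => if_neg fun h => hi h.1.symm]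
    have hiff : ((a : ℕ) + 1 = a + 1 ∧ (b : ℕ) + 1 = f (a + 1) ∧ (c : ℕ) + 1 = f (a + 1) ∧
        (d : ℕ) + 1 = a + 1) ↔ ((b : ℕ) = c ∧ (d : ℕ) = a) ∧ (c : ℕ) + 1 = f (a + 1) := by omega
    rw [if_congr hiff rfl rfl]
    simp only [ha, true_and, ite_and]
  · refine (Finset.sum_eq_zero fun i hi => ?_).trans ?_
    · exact if_neg (by rintro ⟨rfl, -⟩; exact ha hi)
    simp [ha]

lemma sum_flip' (S : Finset ℕ) (f : ℕ → ℕ) :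
    (∑ i ∈ S, Eunit F n (f i) i ⊗ₖ Eunit F n i (f i)) (a, c) (b, d)
    = if b = c ∧ d = a then (if (c : ℕ) + 1 ∈ S ∧ (a : ℕ) + 1 = f (c + 1) then 1 else 0)
      else 0 := by
  simp only [Matrix.sum_apply, Eunit_kron, Fin.ext_iff]
  by_cases ha : (c : ℕ) + 1 ∈ S
  · rw [Finset.sum_eq_single_of_mem _ ha fun i _ hi => if_neg fun h => hi h.2.2.1.symm]
    have hiff : ((a : ℕ) + 1 = f (c + 1) ∧ (b : ℕ) + 1 = c + 1 ∧ (c : ℕ) + 1 = c + 1 ∧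
        (d : ℕ) + 1 = f (c + 1)) ↔ ((b : ℕ) = c ∧ (d : ℕ) = a) ∧ (a : ℕ) + 1 = f (c + 1) := by
      omega
    rw [if_congr hiff rfl rfl]
    simp only [ha, true_and, ite_and]
  · refine (Finset.sum_eq_zero fun i hi => ?_).trans ?_
    · exact if_neg (by rintro ⟨-, -, rfl, -⟩; exact ha hi)
    simp [ha]

lemma sum_sum_flip (S : Finset ℕ) (T : ℕ → Finset ℕ) :
    (∑ i ∈ S, ∑ j ∈ T i, Eunit F n i j ⊗ₖ Eunit F n j i) (a, c) (b, d)
    = if b = c ∧ d = a then (if (a : ℕ) + 1 ∈ S ∧ (c : ℕ) + 1 ∈ T (a + 1) then 1 else 0)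
      else 0 := by
  simp only [Matrix.sum_apply, Eunit_kron, Fin.ext_iff]
  by_cases ha : (a : ℕ) + 1 ∈ S
  · rw [Finset.sum_eq_single_of_mem _ ha fun i _ hi =>
      Finset.sum_eq_zero fun j _ => if_neg fun h => hi h.1.symm]
    by_cases hc : (c : ℕ) + 1 ∈ T (a + 1)
    · rw [Finset.sum_eq_single_of_mem _ hc fun i _ hi => if_neg fun h => hi h.2.2.1.symm]
      split_ifs <;> first | rfl | (exfalso; omega) | (exfalso; tauto)
    · refine (Finset.sum_eq_zero fun i hi => ?_).trans ?_
      · exact if_neg (by rintro ⟨-, -, rfl, -⟩; exact hc hi)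
      simp [hc]
  · refine (Finset.sum_eq_zero fun i hi => Finset.sum_eq_zero fun j _ => ?_).trans ?_
    · exact if_neg (by rintro ⟨rfl, -⟩; exact ha hi)
    simp [ha]

lemma sum_sum_flip' (S : Finset ℕ) (T : ℕ → Finset ℕ) :
    (∑ i ∈ S, ∑ j ∈ T i, Eunit F n j i ⊗ₖ Eunit F n i j) (a, c) (b, d)
    = if b = c ∧ d = a then (if (c : ℕ) + 1 ∈ S ∧ (a : ℕ) + 1 ∈ T (c + 1) then 1 else 0)
      else 0 := by
  simp only [Matrix.sum_apply, Eunit_kron, Fin.ext_iff]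
  by_cases ha : (c : ℕ) + 1 ∈ S
  · rw [Finset.sum_eq_single_of_mem _ ha fun i _ hi =>
      Finset.sum_eq_zero fun j _ => if_neg fun h => hi h.2.2.1.symm]
    by_cases hc : (a : ℕ) + 1 ∈ T (c + 1)
    · rw [Finset.sum_eq_single_of_mem _ hc fun i _ hi => if_neg fun h => hi h.1.symm]
      split_ifs <;> first | rfl | (exfalso; omega) | (exfalso; tauto)
    · refine (Finset.sum_eq_zero fun i hi => ?_).trans ?_
      · exact if_neg (by rintro ⟨rfl, -⟩; exact hc hi)
      simp [hc]
  · refine (Finset.sum_eq_zero fun i hi => Finset.sum_eq_zero fun j _ => ?_).trans ?_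
    · exact if_neg (by rintro ⟨-, -, rfl, -⟩; exact ha hi)
    simp [ha]

lemma sum_diag :
    (∑ i ∈ Icc 1 (2 * n + 1), ∑ j ∈ Icc 1 (i - 1), Eunit F n i i ⊗ₖ Eunit F n j j) (a, c) (b, d)
    = if b = a ∧ d = c then (if c < a then 1 else 0) else 0 := by
  simp only [Matrix.sum_apply, Eunit_kron, Fin.ext_iff, Fin.lt_def]
  have ha : (a : ℕ) + 1 ∈ Icc 1 (2 * n + 1) := by rw [Finset.mem_Icc]; omega
  rw [Finset.sum_eq_single_of_mem _ ha fun i _ hi =>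
      Finset.sum_eq_zero fun j _ => if_neg fun h => hi h.1.symm]
  by_cases hc : (c : ℕ) + 1 ∈ Icc 1 ((a : ℕ) + 1 - 1)
  · rw [Finset.sum_eq_single_of_mem _ hc fun i _ hi => if_neg fun h => hi h.2.2.1.symm]
    rw [Finset.mem_Icc] at hc
    split_ifs <;> first | rfl | (exfalso; omega)
  · refine (Finset.sum_eq_zero fun i hi => ?_).trans ?_
    · exact if_neg (by rintro ⟨-, -, rfl, -⟩; exact hc hi)
    rw [Finset.mem_Icc] at hc
    split_ifs <;> first | rfl | (exfalso; omega)

lemma sum_rankOne {t : F} (ht : t ≠ 0) :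
    (∑ i ∈ Icc 1 (2 * n + 1), ∑ j ∈ Icc 1 (i - 1),
        t ^ (mwt n i - mwt n j) • (Eunit F n i (pr n j) ⊗ₖ Eunit F n (pr n i) j)) (a, c) (b, d)
    = if c = a.rev ∧ d = b.rev then (if 2 * n < (a : ℕ) + b then wt n t a * wt n t b else 0)
      else 0 := by
  have hval : d = b.rev → t ^ (mwt n (a + 1) - mwt n (d + 1)) = wt n t a * wt n t b := by
    rintro rfl
    rw [mwt_rev, sub_neg_eq_add, zpow_add₀ ht, wt, wt]
  have hd : d = b.rev ↔ (b : ℕ) + d = 2 * n := by rw [Fin.ext_iff, Fin.val_rev]; omega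
  have hca : c = a.rev ↔ (a : ℕ) + c = 2 * n := by rw [Fin.ext_iff, Fin.val_rev]; omega
  rw [hd] at hval
  simp only [Matrix.sum_apply, Matrix.smul_apply, Eunit_kron, hd, hca, pr, smul_eq_mul, mul_ite,
    mul_one, mul_zero]
  have ha : (a : ℕ) + 1 ∈ Icc 1 (2 * n + 1) := by rw [Finset.mem_Icc]; omega
  rw [Finset.sum_eq_single_of_mem _ ha fun i _ hi =>
      Finset.sum_eq_zero fun j _ => if_neg fun h => hi h.1.symm]
  by_cases hc : (d : ℕ) + 1 ∈ Icc 1 ((a : ℕ) + 1 - 1)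
  · rw [Finset.sum_eq_single_of_mem _ hc fun i _ hi => if_neg fun h => hi h.2.2.2.symm]
    rw [Finset.mem_Icc] at hc
    split_ifs <;> first | rfl | (exfalso; omega) | (exact hval (by omega))
  · refine (Finset.sum_eq_zero fun i hi => ?_).trans ?_
    · exact if_neg (by rintro ⟨-, -, -, rfl⟩; exact hc hi)
    rw [Finset.mem_Icc] at hc
    split_ifs <;> first | rfl | (exfalso; omega)

end Entries

/-! ### Entries and action of `R` -/

/-- The coefficient of `E_{ac} ⊗ E_{ca}` in the weighted-flip part of `R`, with 0-based indices
`a`, `c`. -/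
def flipCoeff (n : ℕ) (r s : F) (a c : ℕ) : F :=
  if a = n ∨ c = n then 1
  else if a = c then r⁻¹ * s
  else if a + c = 2 * n then r * s⁻¹
  else if (a < n ∧ c < n ∧ a < c) ∨ (a < n ∧ n < c ∧ 2 * n < a + c) ∨
      (n < a ∧ c < n ∧ a + c < 2 * n) ∨ (n < a ∧ n < c ∧ c < a) then r⁻¹ * s⁻¹
  else r * s

/-- Entries of `R`: a weighted flip, a diagonal part, and half of a rank one matrix on the
vectors `e_a ⊗ e_{a'}`. -/
lemma Rmat_apply {r s t : F} (ht : t ≠ 0) (a b c d : Fin (2 * n + 1)) :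
    Rmat F n r s t (a, c) (b, d) =
      (if b = c ∧ d = a then flipCoeff n r s a c else 0)
      + (r⁻¹ * s - r * s⁻¹) * ((if b = a ∧ d = c then (if c < a then 1 else 0) else 0)
        - (if c = a.rev ∧ d = b.rev then
            (if 2 * n < (a : ℕ) + b then wt n t a * wt n t b else 0) else 0)) := by
  have h1 := sum_flip (F := F) a b c d ((Icc 1 (2 * n + 1)).erase (n + 1)) (fun i => i)
  have h2 := sum_flip (F := F) a b c d ((Icc 1 (2 * n + 1)).erase (n + 1)) (fun _ => n + 1)
  have h3 := sum_flip' (F := F) a b c d ((Icc 1 (2 * n + 1)).erase (n + 1)) (fun _ => n + 1)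
  have h4 := sum_flip' (F := F) a b c d ((Icc 1 (2 * n + 1)).erase (n + 1)) (fun i => pr n i)
  have h5 := Eunit_kron (F := F) a b c d (n + 1) (n + 1) (n + 1) (n + 1)
  -- The sums over a single index are rewritten from instances with an explicit second index,
  -- because `sum_flip` and `sum_flip'` only match these by higher-order unification.
  unfold Rmat
  simp only [Matrix.add_apply, Matrix.smul_apply, Matrix.sub_apply, smul_eq_mul,
    sum_sum_flip, sum_sum_flip', sum_diag, sum_rankOne a b c d ht]
  rw [h1, h2, h3, h4, h5]
  have ha := a.isLt
  have hc := c.isLt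
  by_cases hflip : b = c ∧ d = a
  · obtain ⟨rfl, rfl⟩ := hflip
    -- What remains is to match the index ranges of the sums with the cases of `flipCoeff`.
    generalize (r⁻¹ * s - r * s⁻¹) * _ = Z
    simp only [and_self, if_true, Finset.mem_erase, Finset.mem_Icc, pr, flipCoeff]
    rcases lt_trichotomy (b : ℕ) n with hb | hb | hb <;>
    rcases lt_trichotomy (d : ℕ) n with hd | hd | hd <;>
    rcases lt_trichotomy (b : ℕ) d with hbd | hbd | hbd <;>
    rcases lt_trichotomy ((b : ℕ) + d) (2 * n) with hs | hs | hs <;>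
    first
    | (exfalso; omega)
    | (repeat first | rw [if_pos (by omega)] | rw [if_neg (by omega)]
       ring)
  · have hn : ¬ ((a : ℕ) + 1 = n + 1 ∧ (b : ℕ) + 1 = n + 1 ∧ (c : ℕ) + 1 = n + 1 ∧
        (d : ℕ) + 1 = n + 1) := by
      rintro ⟨h1, h2, h3, h4⟩
      exact hflip ⟨Fin.ext (by omega), Fin.ext (by omega)⟩
    simp only [hflip, if_false, hn]
    ring

lemma Rmat_mulVec {r s t : F} (ht : t ≠ 0) (v : Fin (2 * n + 1) × Fin (2 * n + 1) → F)
    (a c : Fin (2 * n + 1)) :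
    (Rmat F n r s t *ᵥ v) (a, c) = flipCoeff n r s a c * v (c, a)
      + (r⁻¹ * s - r * s⁻¹) * ((if c < a then v (a, c) else 0)
        - (if c = a.rev then ∑ b : Fin (2 * n + 1),
            (if 2 * n < (a : ℕ) + b then wt n t a * wt n t b else 0) * v (b, b.rev) else 0)) := by
  have hterm : ∀ b d : Fin (2 * n + 1), Rmat F n r s t (a, c) (b, d) * v (b, d)
      = (if b = c then (if d = a then flipCoeff n r s a c * v (b, d) else 0) else 0)
        + (r⁻¹ * s - r * s⁻¹) *
          ((if b = a then (if d = c then (if c < a then v (b, d) else 0) else 0) else 0)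
          - (if c = a.rev then (if d = b.rev then
              (if 2 * n < (a : ℕ) + b then wt n t a * wt n t b else 0) * v (b, d)
              else 0) else 0)) := by
    intro b d
    rw [Rmat_apply ht]
    simp only [ite_and]
    split_ifs <;> ring
  simp only [Matrix.mulVec, dotProduct, Fintype.sum_prod_type, hterm, Finset.sum_add_distrib,
    ← Finset.mul_sum, Finset.sum_sub_distrib, Finset.sum_ite_irrel, Finset.sum_ite_eq',
    Finset.sum_const_zero, Finset.mem_univ, if_true]

/-- The flip weights of a pair with `a ≠ c`, `c ≠ a'` are mutually inverse. Hence the block of `R`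
on `e_a ⊗ e_c`, `e_c ⊗ e_a` has determinant `-1`, and trace `r⁻¹s - rs⁻¹`. -/
lemma flipCoeff_mul {r s : F} (hr : r ≠ 0) (hs : s ≠ 0) {a c : ℕ} (hac : a ≠ c)
    (h : a + c ≠ 2 * n) : flipCoeff n r s a c * flipCoeff n r s c a = 1 := by
  unfold flipCoeff
  split_ifs <;> first | (exfalso; omega) | (field_simp)

lemma flipCoeff_rev {r s t : F} (hts : t ^ 2 = r⁻¹ * s) (a : Fin (2 * n + 1)) :
    flipCoeff n r s a a.rev = flipWt n t a := by
  have ha := a.isLt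
  have hrev : (a.rev : ℕ) = 2 * n - a := by rw [Fin.val_rev]; omega
  unfold flipCoeff flipWt
  rw [hts, hrev]
  split_ifs <;> first | rfl | (exfalso; omega) | simp [mul_comm]

/-- On the vectors `e_a ⊗ e_{a'}`, the matrix `R` acts by `blk`. -/
lemma Rmat_mulVec_rev {r s t : F} (ht : t ≠ 0) (hts : t ^ 2 = r⁻¹ * s)
    (v : Fin (2 * n + 1) × Fin (2 * n + 1) → F) (a : Fin (2 * n + 1)) :
    (Rmat F n r s t *ᵥ v) (a, a.rev) = (blk n t *ᵥ fun b => v (b, b.rev)) a := by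
  have ha := a.isLt
  have hinv : r * s⁻¹ = (t ^ 2)⁻¹ := by rw [hts]; simp [mul_comm]
  have hlt : a.rev < a ↔ n < (a : ℕ) := by rw [Fin.lt_def, Fin.val_rev]; omega
  rw [Rmat_mulVec ht, if_pos rfl, flipCoeff_rev hts, ← hts, hinv]
  have hterm : ∀ b : Fin (2 * n + 1), blk n t a b * v (b, b.rev)
      = (if b = a.rev then flipWt n t a * v (b, b.rev) else 0)
        + (t ^ 2 - (t ^ 2)⁻¹) *
          ((if b = a then (if n < (a : ℕ) then v (b, b.rev) else 0) else 0)
          - (if 2 * n < (a : ℕ) + b then wt n t a * wt n t b else 0) * v (b, b.rev)) := by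
    intro b
    simp only [blk, Matrix.of_apply, eq_comm (a := a) (b := b)]
    split_ifs <;> ring
  simp only [Matrix.mulVec, dotProduct, hterm, Finset.sum_add_distrib, ← Finset.mul_sum,
    Finset.sum_sub_distrib, Finset.sum_ite_eq', Finset.mem_univ, if_true, Fin.rev_rev, hlt]

/-! ### The quadratic relation up to rank one -/

/-- The quadratic relation holds up to the rank one operator with matrix `u_a u_b` on the
vectors `e_a ⊗ e_{a'}`. -/
lemma Rmat_quadratic {r s t : F} (hr : r ≠ 0) (hs : s ≠ 0) (ht : t ≠ 0)
    (hts : t ^ 2 = r⁻¹ * s) (v : Fin (2 * n + 1) × Fin (2 * n + 1) → F)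
    (a c : Fin (2 * n + 1)) :
    (Rmat F n r s t *ᵥ (Rmat F n r s t *ᵥ v)) (a, c)
      = (r⁻¹ * s - r * s⁻¹) * (Rmat F n r s t *ᵥ v) (a, c) + v (a, c)
        - (if c = a.rev then (r⁻¹ * s - r * s⁻¹) * (r * s⁻¹) ^ (2 * n) * wt n t a *
            (wt n t ⬝ᵥ fun b => v (b, b.rev)) else 0) := by
  by_cases h : c = a.rev
  · subst h
    have hinv : r * s⁻¹ = (t ^ 2)⁻¹ := by rw [hts]; simp [mul_comm]
    rw [if_pos rfl, Rmat_mulVec_rev ht hts, Rmat_mulVec_rev ht hts, ← hts, hinv]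
    simp only [Rmat_mulVec_rev ht hts]
    change (blk n t *ᵥ (blk n t *ᵥ fun b => v (b, b.rev))) a = _
    rw [Matrix.mulVec_mulVec]
    simp only [Matrix.mulVec, dotProduct, blk_sq ht, sub_mul, add_mul, Finset.sum_add_distrib,
      Finset.sum_sub_distrib, ite_mul, one_mul, zero_mul, Finset.sum_ite_eq, Finset.mem_univ,
      if_true, Finset.mul_sum]
    simp only [← Finset.sum_sub_distrib]
    congr 1
    · congr 1
      exact Finset.sum_congr rfl fun b _ => by ring
    · exact Finset.sum_congr rfl fun b _ => by ring
  · have h' : a ≠ c.rev := fun e => h (by rw [e, Fin.rev_rev])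
    have hsum : (a : ℕ) + c ≠ 2 * n := fun e => h (by rw [Fin.ext_iff, Fin.val_rev]; omega)
    rw [Rmat_mulVec ht, Rmat_mulVec ht v a c, Rmat_mulVec ht v c a]
    simp only [h, h', if_false, sub_zero]
    rcases lt_trichotomy a c with hlt | rfl | hlt
    · have hg := flipCoeff_mul hr hs (Fin.val_ne_of_ne hlt.ne) hsum
      simp only [hlt, hlt.not_gt, if_true, if_false]
      linear_combination v (a, c) * hg
    · have hg : flipCoeff n r s a a = if (a : ℕ) = n then 1 else r⁻¹ * s := by
        simp only [flipCoeff, or_self, if_true]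
      rw [hg, if_neg (by omega)]
      simp only [lt_irrefl, if_false]
      field_simp
      ring
    · have hg := flipCoeff_mul hr hs (Fin.val_ne_of_ne hlt.ne') hsum
      simp only [hlt, hlt.not_gt, if_true, if_false]
      linear_combination v (a, c) * hg

end BraidedR

/-- **Lemma 3.8.** The basic braided `R`-matrix is annihilated by its minimal polynomial
`(X − r⁻¹s)(X + rs⁻¹)(X − (rs⁻¹)^{2n})`. -/
theorem lemma_3_8_cubic (n : ℕ) (hn : 1 ≤ n)
    (F : Type*) [Field F] (r s t : F)
    (hr : r ≠ 0) (hs : s ≠ 0) (ht : t ≠ 0) (hts : t ^ 2 = r⁻¹ * s) :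
    (Rmat F n r s t - (r⁻¹ * s) • 1) * (Rmat F n r s t + (r * s⁻¹) • 1)
        * (Rmat F n r s t - (r * s⁻¹) ^ (2 * n) • 1) = 0 := by
  have hinv : r * s⁻¹ = (t ^ 2)⁻¹ := by rw [hts]; simp [mul_comm]
  refine Matrix.ext_of_mulVec_single fun p => ?_
  generalize (Pi.single p 1 : Fin (2 * n + 1) × Fin (2 * n + 1) → F) = v
  rw [Matrix.zero_mulVec, ← Matrix.mulVec_mulVec]
  -- `y` is killed by the left eigenvector `wt` of eigenvalue `(rs⁻¹)^{2n}`.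
  set y := (Rmat F n r s t - (r * s⁻¹) ^ (2 * n) • 1) *ᵥ v with hy
  have hdot : (BraidedR.wt n t ⬝ᵥ fun b => y (b, b.rev)) = 0 := by
    have hyb : (fun b : Fin (2 * n + 1) => y (b, b.rev))
        = BraidedR.blk n t *ᵥ (fun b => v (b, b.rev))
          - (r * s⁻¹) ^ (2 * n) • fun b : Fin (2 * n + 1) => v (b, b.rev) := by
      funext b
      rw [hy, Matrix.sub_mulVec, Matrix.smul_mulVec, Matrix.one_mulVec, Pi.sub_apply,
        BraidedR.Rmat_mulVec_rev ht hts]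
      rfl
    rw [hyb, dotProduct_sub, Matrix.dotProduct_mulVec, BraidedR.wt_vecMul_blk ht, hinv,
      smul_dotProduct, dotProduct_smul, sub_self]
  funext ⟨a, c⟩
  have hq := BraidedR.Rmat_quadratic hr hs ht hts y a c
  rw [hdot, mul_zero, ite_self, sub_zero] at hq
  rw [← Matrix.mulVec_mulVec, Matrix.sub_mulVec, Matrix.add_mulVec, Matrix.mulVec_add,
    Matrix.smul_mulVec, Matrix.one_mulVec, Matrix.mulVec_smul, Matrix.smul_mulVec,
    Matrix.one_mulVec]
  simp only [Pi.sub_apply, Pi.add_apply, Pi.smul_apply, Pi.zero_apply, smul_eq_mul, hq]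
  have h1 : r⁻¹ * s * (r * s⁻¹) = 1 := by field_simp
  linear_combination (-y (a, c)) * h1
end

section
/- With R₁₂ := R ⊗ I_N and R₂₃ := I_N ⊗ R (N³×N³ matrices, I_N the N×N identity), the braid relation R₁₂·R₂₃·R₁₂ = R₂₃·R₁₂·R₂₃ holds. (Braid relation satisfied by the basic braided R-matrix; part of Proposition 3.19.) -/
/-!
For a vector `e_a ⊗ e_b` with `b ≠ a'` the matrix `R` acts as a deformed permutation,
`R (e_a ⊗ e_b) = f a b • e_b ⊗ e_a + [b < a] z • e_a ⊗ e_b`, with `z = r⁻¹s - rs⁻¹`, and it maps the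
span of the vectors `e_a ⊗ e_{a'}` to itself through a symmetric matrix `M`. The structure
`BraidData` records the few identities between the scalars that the proof needs; the essential one
is the telescoping identity `tel` for the sums of `t^{2 m_p}` over intervals.

Write `A = R₁₂`, `C = R₂₃`, and let `K₁`, `K₂` be the rank one operator
`K = Σ t^{m_i-m_j} E_{i,j'} ⊗ E_{i',j}` on the first, resp. last, two tensor factors. Three
relations of Birman–Murakami–Wenzl type follow by direct computation, and from one another by the
symmetries below:

* `A² = 1 + z A - z λ K₁` and `C² = 1 + z C - z λ K₂` for a scalar `λ` (`quad`, `quad₂`);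
* `A C K₁ = X = K₂ A C`, an explicit matrix (`ACK`, `KAC`);
* `C A K₂ = Xᵀ = K₁ C A` (`CAK`, `KCA`).

Put `B = A C A - C A C`. The unwanted terms cancel in `B A = (z - C) B` and `B C = (z - A) B`, so
`ker B` is stable under `A` and `C` (`inv_A`, `inv_C`). Moreover, if `a < b` then `A` maps
`e_a ⊗ e_b ⊗ e_c` to a nonzero multiple of `e_b ⊗ e_a ⊗ e_c` when `b ≠ a'`, and to such a multiple
plus a combination of vectors `e_x ⊗ e_{x'} ⊗ e_c` with `x > b` when `b = a'` (`swap₁`, `swap₂`). An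
induction on `height` thus reduces `B = 0` to the basis vectors `e_a ⊗ e_b ⊗ e_c` with `a ≤ b ≤ c`,
for which both sides of the braid relation are computed explicitly (`kill_sorted`).

Two symmetries cut the work down. Transposition interchanges `f a b` and `f b a`, and reversing the
tensor factors while applying `i ↦ i'` to the indices interchanges `A` and `C` of the transposed
data.
-/

open Matrix Finset
open scoped Kronecker

/-- `R₁₂ = R ⊗ I_N`, viewed as an `N³ × N³` matrix (reindexed by associativity). -/
noncomputable def R12 (F : Type*) [Field F] (n : ℕ) (r s t : F) :
    Matrix (Fin (2 * n + 1) × Fin (2 * n + 1) × Fin (2 * n + 1))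
      (Fin (2 * n + 1) × Fin (2 * n + 1) × Fin (2 * n + 1)) F :=
  Matrix.reindex (Equiv.prodAssoc _ _ _) (Equiv.prodAssoc _ _ _)
    (Rmat F n r s t ⊗ₖ (1 : Matrix (Fin (2 * n + 1)) (Fin (2 * n + 1)) F))

/-- `R₂₃ = I_N ⊗ R`, an `N³ × N³` matrix. -/
noncomputable def R23 (F : Type*) [Field F] (n : ℕ) (r s t : F) :
    Matrix (Fin (2 * n + 1) × Fin (2 * n + 1) × Fin (2 * n + 1))
      (Fin (2 * n + 1) × Fin (2 * n + 1) × Fin (2 * n + 1)) F :=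
  (1 : Matrix (Fin (2 * n + 1)) (Fin (2 * n + 1)) F) ⊗ₖ Rmat F n r s t

/-! ### Braid data and symmetries -/

/-- The scalars describing an orthogonal `R`-matrix on `F^N` and the identities they satisfy. `f a b`
is the coefficient of `e_b ⊗ e_a` in `R (e_a ⊗ e_b)`, `g a` stands for `t^{m_a}`, `q` and `qi` for
`r⁻¹s` and its inverse, and `lam` for the eigenvalue `λ` of `R` on the
image of `K = Σ t^{m_i-m_j} E_{i,j'} ⊗ E_{i',j}`. The index set is
`Fin N`, counted from zero, and `a' = a.rev`. The fields `tel` and `tel_top` evaluate the sums of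
`g p ^ 2` over the open intervals `(lo, hi)` and `(lo, N)`. -/
structure BraidData (F : Type*) [Field F] (N : ℕ) where
  f : Fin N → Fin N → F
  g : Fin N → F
  q : F
  qi : F
  lam : F
  q_mul : q * qi = 1
  g_rev : ∀ a, g a * g a.rev = 1
  f_inv : ∀ a b, a ≠ b → b ≠ a.rev → f a b * f b a = 1
  f_rev : ∀ a b, a ≠ b → b ≠ a.rev → f a b.rev = f b a
  f_self : ∀ a, a ≠ a.rev → f a a = q
  f_anti : ∀ a, a ≠ a.rev → f a a.rev = qi
  f_mid : ∀ a, a = a.rev → f a a = 1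
  tel : ∀ lo hi, lo < hi → (q - qi) * ∑ p with lo < p ∧ p < hi, g p ^ 2 =
    f lo lo.rev * g lo ^ 2 - f hi hi * g hi ^ 2 +
      if lo < lo.rev ∧ hi.rev < hi then q - qi else 0
  tel_top : ∀ lo, (q - qi) * ∑ p with lo < p, g p ^ 2 =
    f lo lo.rev * g lo ^ 2 - lam + if lo < lo.rev then q - qi else 0

namespace BraidData
variable {F : Type*} [Field F] {N : ℕ} (D : BraidData F N)

/-- The scalar `z = r⁻¹s - rs⁻¹`. -/
def z : F := D.q - D.qi

/-- The matrix of `R` on the span of the vectors `e_a ⊗ e_{a'}`: `M x a` is the coefficient of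
`e_x ⊗ e_{x'}` in `R (e_a ⊗ e_{a'})`. -/
def M (x a : Fin N) : F :=
  (if x = a.rev then D.f a a.rev else 0) + (if x = a ∧ a.rev < a then D.z else 0)
    - (if a.rev < x then D.z * D.g x * D.g a else 0)

/-- The entry of `R` in row `(x, y)` and column `(a, b)`. -/
def entry (x y a b : Fin N) : F :=
  if y = x.rev then (if b = a.rev then D.M x a else 0)
  else (if x = b ∧ y = a then D.f a b else 0) + (if x = a ∧ y = b ∧ b < a then D.z else 0)

/-- The operator `R ⊗ 1` on the triple tensor power. -/
def A : Matrix (Fin N × Fin N × Fin N) (Fin N × Fin N × Fin N) F :=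
  .of fun i j => if i.2.2 = j.2.2 then D.entry i.1 i.2.1 j.1 j.2.1 else 0

/-- The operator `1 ⊗ R` on the triple tensor power. -/
def C : Matrix (Fin N × Fin N × Fin N) (Fin N × Fin N × Fin N) F :=
  .of fun i j => if i.1 = j.1 then D.entry i.2.1 i.2.2 j.2.1 j.2.2 else 0

/-- The rank one operator `K` acting on the first two tensor factors. Since `g j * g j' = 1`, the
entry `t^{m_i-m_j}` of `K` in row `(i, i')` and column `(j', j)` is `g i * g j'`. -/
def K₁ : Matrix (Fin N × Fin N × Fin N) (Fin N × Fin N × Fin N) F :=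
  .of fun i j => if i.2.1 = i.1.rev ∧ j.2.1 = j.1.rev ∧ i.2.2 = j.2.2 then D.g i.1 * D.g j.1 else 0

/-- The operator `K` acting on the last two tensor factors. -/
def K₂ : Matrix (Fin N × Fin N × Fin N) (Fin N × Fin N × Fin N) F :=
  .of fun i j => if i.2.2 = i.2.1.rev ∧ j.2.2 = j.2.1.rev ∧ i.1 = j.1 then D.g i.2.1 * D.g j.2.1 else 0

/-- The common value of `A C K₁` and `K₂ A C`. -/
def X : Matrix (Fin N × Fin N × Fin N) (Fin N × Fin N × Fin N) F :=
  .of fun i j => if i.2.2 = i.2.1.rev ∧ j.2.1 = j.1.rev ∧ i.1 = j.2.2 then D.g i.2.1 * D.g j.1 else 0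

lemma rev_eq {a b : Fin N} : a.rev = b ↔ a = b.rev := by
  constructor <;> rintro rfl <;> simp

lemma eq_rev_comm {a b : Fin N} : a = b.rev ↔ b = a.rev := by
  constructor <;> rintro rfl <;> simp

lemma f_rev_self (a : Fin N) : D.f a.rev a = D.f a a.rev := by
  by_cases h : a = a.rev
  · rw [← h]
  · have := D.f_anti a.rev (by simpa using Ne.symm h)
    rw [Fin.rev_rev] at this
    rw [this, D.f_anti a h]

lemma f_rev_rev (a b : Fin N) : D.f a.rev b.rev = D.f a b := by
  by_cases h : a = b
  · subst h
    by_cases h : a = a.rev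
    · rw [← h]
    · rw [D.f_self a h, D.f_self _ (by simpa using Ne.symm h)]
  · by_cases h' : b = a.rev
    · subst h'; rw [Fin.rev_rev]; exact D.f_rev_self a
    · rw [D.f_rev a.rev b (by rintro rfl; simp at h') (by simpa using Ne.symm h),
        D.f_rev b a (Ne.symm h) (by rintro rfl; simp at h')]

lemma M_symm (x a : Fin N) : D.M x a = D.M a x := by
  unfold M
  have h1 : x = a.rev ↔ a = x.rev := eq_rev_comm
  have h2 : a.rev < x ↔ x.rev < a := by rw [Fin.rev_lt_iff]
  congr 1
  · congr 1
    · by_cases h : x = a.rev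
      · subst h; simp [f_rev_self]
      · rw [if_neg h, if_neg (by rwa [← h1])]
    · by_cases h : x = a
      · subst h; rfl
      · simp [h, Ne.symm h]
  · simp only [h2]; split_ifs <;> ring

/-- The data obtained by exchanging the arguments of `f`; their `R`-matrix is the transpose. -/
def transpose : BraidData F N where
  f a b := D.f b a
  g := D.g
  q := D.q
  qi := D.qi
  lam := D.lam
  q_mul := D.q_mul
  g_rev := D.g_rev
  f_inv a b h h' := by rw [mul_comm]; exact D.f_inv a b h h'
  f_rev a b h h' := by
    have h1 := D.f_rev b a (Ne.symm h) (by rintro rfl; simp at h')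
    rw [← h1, ← D.f_rev_rev, Fin.rev_rev]
  f_self := D.f_self
  f_anti a h := by rw [f_rev_self]; exact D.f_anti a h
  f_mid := D.f_mid
  tel lo hi h := by rw [f_rev_self]; exact D.tel lo hi h
  tel_top lo := by rw [f_rev_self]; exact D.tel_top lo

lemma M_transpose : D.transpose.M = D.M := by
  ext x a
  simp [M, transpose, z, f_rev_self]

lemma entry_transpose (x y a b : Fin N) : D.transpose.entry a b x y = D.entry x y a b := by
  unfold entry
  rw [M_transpose, M_symm]
  simp only [transpose, z]
  by_cases h : y = x.rev <;> by_cases h' : b = a.rev <;> simp only [h, h', if_true, if_false]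
  · grind [Fin.rev_rev]
  · grind [Fin.rev_rev]
  · congr 1
    · grind
    · grind

/-- Transposing `R`, exchanging the two tensor factors and applying `i ↦ i'` to all indices gives
back `R`. -/
lemma entry_flip (x y a b : Fin N) :
    D.transpose.entry y.rev x.rev b.rev a.rev = D.entry x y a b := by
  unfold entry
  have e1 : x.rev = y.rev.rev ↔ y = x.rev := by rw [Fin.rev_rev, eq_comm]
  have e2 : a.rev = b.rev.rev ↔ b = a.rev := by rw [Fin.rev_rev, eq_comm]
  simp only [e1, e2, M_transpose, Fin.rev_inj]
  by_cases h : y = x.rev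
  · subst h
    simp only [if_true]
    split_ifs with h
    · subst h; simp
    · rfl
  · simp only [h, if_false, transpose, z, f_rev_rev, Fin.rev_lt_rev]
    grind

lemma A_transpose : D.transpose.A = D.Aᵀ := by
  ext i j
  simp only [A, Matrix.transpose_apply, of_apply, entry_transpose, eq_comm]

lemma C_transpose : D.transpose.C = D.Cᵀ := by
  ext i j
  simp only [C, Matrix.transpose_apply, of_apply, entry_transpose, eq_comm]

/-- The involution `(a, b, c) ↦ (c', b', a')` of the basis of the triple tensor power. -/
def flip (N : ℕ) : Fin N × Fin N × Fin N ≃ Fin N × Fin N × Fin N where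
  toFun p := (p.2.2.rev, p.2.1.rev, p.1.rev)
  invFun p := (p.2.2.rev, p.2.1.rev, p.1.rev)
  left_inv p := by simp
  right_inv p := by simp

lemma A_flip : D.transpose.A.submatrix (flip N) (flip N) = D.C := by
  ext ⟨x, y, w⟩ ⟨a, b, c⟩
  simp only [A, C, flip, Equiv.coe_fn_mk, submatrix_apply, of_apply, entry_flip, Fin.rev_inj]

lemma C_flip : D.transpose.C.submatrix (flip N) (flip N) = D.A := by
  ext ⟨x, y, w⟩ ⟨a, b, c⟩
  simp only [A, C, flip, Equiv.coe_fn_mk, submatrix_apply, of_apply, entry_flip, Fin.rev_inj]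

lemma K_flip : D.transpose.K₁.submatrix (flip N) (flip N) = D.K₂ := by
  ext ⟨x, y, w⟩ ⟨a, b, c⟩
  simp only [K₁, K₂, flip, Equiv.coe_fn_mk, submatrix_apply, of_apply, transpose, Fin.rev_inj,
    Fin.rev_rev]
  grind [Fin.rev_rev]

lemma X_flip : D.transpose.X.submatrix (flip N) (flip N) = D.Xᵀ := by
  ext ⟨x, y, w⟩ ⟨a, b, c⟩
  simp only [X, flip, Equiv.coe_fn_mk, submatrix_apply, of_apply, transpose, Fin.rev_inj,
    Fin.rev_rev, Matrix.transpose_apply]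
  grind [Fin.rev_rev]

lemma A_mulVec (v : Fin N × Fin N × Fin N → F) (x y w : Fin N) :
    (D.A *ᵥ v) (x, y, w) = if y = x.rev then ∑ a, D.M x a * v (a, a.rev, w)
      else D.f y x * v (y, x, w) + if y < x then D.z * v (x, y, w) else 0 := by
  simp only [A, mulVec, dotProduct, of_apply, Fintype.sum_prod_type, ite_mul, zero_mul,
    Finset.sum_ite_eq, Finset.mem_univ, if_true, entry]
  split_ifs with h h'
  · simp [ite_mul]
  · simp only [add_mul, Finset.sum_add_distrib]
    congr 1
    · simp [ite_and, Finset.sum_ite_eq]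
    · simp [ite_and, h', Finset.sum_ite_eq]
  · simp only [add_mul, Finset.sum_add_distrib]
    congr 1
    · simp [ite_and, Finset.sum_ite_eq]
    · simp [ite_and, h', Finset.sum_ite_eq]

lemma C_mulVec (v : Fin N × Fin N × Fin N → F) (x y w : Fin N) :
    (D.C *ᵥ v) (x, y, w) = if w = y.rev then ∑ a, D.M y a * v (x, a, a.rev)
      else D.f w y * v (x, w, y) + if w < y then D.z * v (x, y, w) else 0 := by
  simp only [C, mulVec, dotProduct, of_apply, Fintype.sum_prod_type, entry]
  rw [Finset.sum_eq_single x (by intro b _ hb; simp [Ne.symm hb]) (by simp)]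
  simp only [if_true]
  split_ifs with h h'
  · simp [ite_mul]
  · simp only [add_mul, Finset.sum_add_distrib]
    congr 1
    · simp [ite_and, Finset.sum_ite_eq]
    · simp [ite_and, h', Finset.sum_ite_eq]
  · simp only [add_mul, Finset.sum_add_distrib]
    congr 1
    · simp [ite_and, Finset.sum_ite_eq]
    · simp [ite_and, h', Finset.sum_ite_eq]

/-! ### The quadratic relation -/

lemma M_eq_zero {x a : Fin N} (h : x < a.rev) : D.M x a = 0 := by
  have h1 : ¬ a.rev < x := by omega
  have h2 : x ≠ a.rev := by omega
  unfold M
  rw [if_neg h1, if_neg h2, if_neg (by rintro ⟨rfl, h'⟩; exact h1 h')]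
  ring

/-- A truncated row of `K R`, written in terms of a sum of `g p ^ 2` over an interval. -/
lemma sum_g_M_lt (x e : Fin N) : ∑ p with p < e, D.g p * D.M x p =
    (if x.rev < e then D.f x x.rev * D.g x.rev else 0)
    + (if x < e ∧ x.rev < x then D.z * D.g x else 0)
    - D.z * D.g x * ∑ p with x.rev < p ∧ p < e, D.g p ^ 2 := by
  have h0 : ∀ p : Fin N, (if p < e then D.g p * D.M x p else 0) =
      (if p = x.rev then (if x.rev < e then D.f x x.rev * D.g x.rev else 0) else 0)
      + (if p = x then (if x < e ∧ x.rev < x then D.z * D.g x else 0) else 0)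
      - D.z * D.g x * (if x.rev < p ∧ p < e then D.g p ^ 2 else 0) := by
    intro p
    have h1 : x = p.rev ↔ p = x.rev := eq_rev_comm
    have h2 : p.rev < x ↔ x.rev < p := Fin.rev_lt_iff
    unfold M
    simp only [h1, h2]
    by_cases hpe : p < e
    · by_cases hx : p = x.rev
      · subst hx
        simp only [hpe, if_true, lt_irrefl, if_false, and_true, and_false, Fin.rev_rev, f_rev_self]
        grind
      · grind
    · grind
  rw [Finset.sum_filter, Finset.sum_congr rfl (fun p _ => h0 p), Finset.sum_sub_distrib,
    Finset.sum_add_distrib, Finset.sum_ite_eq' , Finset.sum_ite_eq', ← Finset.mul_sum,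
    Finset.sum_filter]
  simp

/-- The vector `(g p)` is an eigenvector of `M` with eigenvalue `λ`, up to the factor `z`. -/
lemma sum_g_M (x : Fin N) : D.z * ∑ p, D.g p * D.M x p = D.z * D.lam * D.g x := by
  have h0 : ∀ p : Fin N, D.g p * D.M x p =
      (if p = x.rev then D.f x x.rev * D.g x.rev else 0)
      + (if p = x then (if x.rev < x then D.z * D.g x else 0) else 0)
      - D.z * D.g x * (if x.rev < p then D.g p ^ 2 else 0) := by
    intro p
    have h1 : x = p.rev ↔ p = x.rev := eq_rev_comm
    have h2 : p.rev < x ↔ x.rev < p := Fin.rev_lt_iff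
    unfold M
    simp only [h1, h2]
    by_cases hx : p = x.rev
    · subst hx
      simp only [if_true, lt_irrefl, if_false, Fin.rev_rev, f_rev_self]
      grind
    · grind
  have h := D.tel_top x.rev
  rw [Finset.sum_congr rfl (fun p _ => h0 p), Finset.sum_sub_distrib,
    Finset.sum_add_distrib, Finset.sum_ite_eq' , Finset.sum_ite_eq', ← Finset.mul_sum,
    ← Finset.sum_filter]
  rw [Fin.rev_rev, f_rev_self] at h
  have hg := D.g_rev x
  simp only [Finset.mem_univ, if_true]
  change D.z * _ = _ at h
  rw [mul_sub, mul_comm D.z (D.z * D.g x * _), mul_assoc, mul_comm _ D.z, mul_comm D.z (D.g x),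
    mul_assoc, h]
  unfold z
  split_ifs <;> linear_combination (-(D.q-D.qi) * D.f x x.rev * D.g x.rev) * hg

/-- The central identity for `M`: it evaluates the partial sums of `g p * M x p` by telescoping. Both
`M_sq` and `AC_cup` are consequences. -/
lemma trunc (x d : Fin N) :
    D.f d d * D.M x d.rev - (if d < d.rev then D.z * D.M x d else 0)
      + D.z * D.g d * ∑ p with p < d.rev, D.g p * D.M x p = if x = d then 1 else 0 := by
  rw [sum_g_M_lt]
  have hq := D.q_mul
  have hz : D.z = D.q - D.qi := rfl
  have hgd := D.g_rev d
  have hgx := D.g_rev x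
  have hfd := D.f_self d
  have hfd0 := D.f_mid d
  have hfx := D.f_anti x
  have hfx0 := D.f_mid x
  have hr := D.f_rev_self d
  rcases lt_trichotomy x d with h | rfl | h
  · have hd : ¬ x.rev < d.rev := by simpa using h.le
    have e : ({p | x.rev < p ∧ p < d.rev} : Finset (Fin N)) = ∅ := by
      ext p; simp; omega
    rw [e, D.M_eq_zero (by simpa using h), if_neg hd, if_neg h.ne]
    have h3 : ¬ (x < d.rev ∧ x.rev < x) := by omega
    rw [if_neg h3]
    split_ifs with h4
    · rw [D.M_eq_zero (h.trans h4)]; simp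
    · simp
  · have e : ({p | x.rev < p ∧ p < x.rev} : Finset (Fin N)) = ∅ := by
      ext p; simp; omega
    rw [e]
    unfold M
    simp only [Fin.rev_rev]
    by_cases hx : x = x.rev
    · simp [← hx, hfx0 hx]
    · rcases lt_or_gt_of_ne hx with h | h
      · simp [h, h.not_gt, hx, hr, hfx hx, hfd hx]
        grind
      · simp [h, h.not_gt, hx, hr, hfx hx, hfd hx]
        grind
  · have hT := D.tel x.rev d.rev (by simpa using h)
    change D.z * _ = _ at hT
    have e : D.z * D.g d * ((if x.rev < d.rev then D.f x x.rev * D.g x.rev else 0)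
        + (if x < d.rev ∧ x.rev < x then D.z * D.g x else 0)
        - D.z * D.g x * ∑ p with x.rev < p ∧ p < d.rev, D.g p ^ 2)
        = D.z * D.g d * ((if x.rev < d.rev then D.f x x.rev * D.g x.rev else 0)
        + (if x < d.rev ∧ x.rev < x then D.z * D.g x else 0)
        - D.g x * (D.z * ∑ p with x.rev < p ∧ p < d.rev, D.g p ^ 2)) := by ring
    rw [e, hT]
    have h1 : x.rev < d.rev := by simpa using h
    simp only [h1, if_true, h.ne', if_false, Fin.rev_rev, D.f_rev_rev, D.f_rev_self]
    unfold M
    simp only [Fin.rev_rev, h.ne', if_false, h, if_true, ← hz, hr]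
    by_cases hxd : x = d.rev
    · subst hxd
      rw [Fin.rev_rev] at *
      have hd : d < d.rev := h
      have hd' : d ≠ d.rev := hd.ne
      simp only [hd, hd.not_gt, if_true, if_false, and_true, and_false, true_and,
        false_and, lt_irrefl, hfd hd', D.f_anti d hd', hr]
      linear_combination (-D.z * (D.qi * D.g d ^ 2 - D.q * D.g d.rev ^ 2 + D.z)) * hgd - D.z * hz
    · simp only [hxd, if_false, false_and]
      split_ifs <;> first
        | (exfalso; omega)
        | linear_combination (D.z * D.f d d * D.g x * D.g d.rev) * hgd
            - D.z * D.g d * D.f x x.rev * D.g x.rev * hgx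

lemma f_self' (a : Fin N) : D.f a a = D.f a a.rev + if a = a.rev then 0 else D.z := by
  split_ifs with h
  · rw [← h]; simp
  · rw [D.f_self a h, D.f_anti a h]; unfold z; ring

lemma M_sq (y a : Fin N) : ∑ k, D.M y k * D.M k a =
    (if y = a then 1 else 0) + D.z * D.M y a - D.z * D.lam * D.g y * D.g a := by
  have h0 : ∀ k : Fin N, D.M y k * D.M k a =
      (if k = y.rev then D.f y y.rev * D.M y.rev a + D.z * D.g y * D.g y.rev * D.M y.rev a else 0)
      + (if k = y then (if y.rev < y then D.z * D.M y a else 0) else 0)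
      - D.z * D.g y * (D.g k * D.M a k)
      + D.z * D.g y * (if k < y.rev then D.g k * D.M a k else 0) := by
    intro k
    have h1 : y = k.rev ↔ k = y.rev := eq_rev_comm
    have h2 : k.rev < y ↔ y.rev < k := Fin.rev_lt_iff
    rw [D.M_symm a k]
    conv_lhs => rw [M]
    simp only [h1, h2]
    by_cases hx : k = y.rev
    · subst hx
      simp only [if_true, lt_irrefl, if_false, Fin.rev_rev, f_rev_self]
      grind
    · grind
  have h := D.trunc a y
  have h' := D.sum_g_M a
  rw [Finset.sum_congr rfl (fun p _ => h0 p), Finset.sum_add_distrib, Finset.sum_sub_distrib,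
    Finset.sum_add_distrib, Finset.sum_ite_eq' , Finset.sum_ite_eq', ← Finset.mul_sum,
    ← Finset.mul_sum, ← Finset.sum_filter]
  rw [D.f_self' y] at h
  have hg := D.g_rev y
  simp only [Finset.mem_univ, if_true]
  rw [D.M_symm y.rev a, D.M_symm y a]
  have e1 : (if y = a then (1:F) else 0) = if a = y then 1 else 0 := by simp only [eq_comm]
  rw [e1, ← h]
  by_cases hy : y = y.rev
  · have h3 : ¬ y.rev < y := by omega
    have h4 : ¬ y < y.rev := by omega
    simp only [h3, h4, if_false, if_pos hy]
    have hy' : y.rev = y := hy.symm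
    simp only [hy'] at hg ⊢
    linear_combination (D.z * D.M a y) * hg - D.g y * h'
  · rcases lt_or_gt_of_ne hy with h3 | h3
    · simp only [h3, h3.not_gt, if_false, if_true, hy]
      linear_combination (D.z * D.M a y.rev) * hg - D.g y * h'
    · simp only [h3, h3.not_gt, if_false, if_true, hy]
      linear_combination (D.z * D.M a y.rev) * hg - D.g y * h'

lemma K₁_mulVec (v : Fin N × Fin N × Fin N → F) (x y w : Fin N) :
    (D.K₁ *ᵥ v) (x, y, w) = if y = x.rev then D.g x * ∑ a, D.g a * v (a, a.rev, w) else 0 := by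
  simp only [K₁, mulVec, dotProduct, of_apply, Fintype.sum_prod_type, ite_mul, zero_mul]
  split_ifs with h
  · simp [h, ite_and, Finset.mul_sum, mul_assoc]
  · simp [h]

/-- The quadratic relation for `R` modulo `K`. -/
lemma quad : D.A * D.A = 1 + D.z • D.A - (D.z * D.lam) • D.K₁ := by
  apply Matrix.toLin'.injective
  ext1 p
  ext ⟨x, y, w⟩
  simp only [Matrix.toLin'_mul, LinearMap.comp_apply, Matrix.toLin'_apply, Matrix.sub_mulVec,
    Matrix.add_mulVec, Matrix.one_mulVec, Matrix.smul_mulVec, Pi.add_apply, Pi.sub_apply,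
    Pi.smul_apply, smul_eq_mul, LinearMap.coe_single]
  generalize (Pi.single p 1 : Fin N × Fin N × Fin N → F) = v
  rw [K₁_mulVec, A_mulVec, A_mulVec]
  by_cases h : y = x.rev
  · subst h
    simp only [if_true, A_mulVec, Finset.mul_sum]
    rw [Finset.sum_comm]
    simp only [← mul_assoc, ← Finset.sum_mul, M_sq]
    simp only [sub_mul, add_mul, Finset.sum_sub_distrib, Finset.sum_add_distrib, ite_mul, one_mul,
      zero_mul, Finset.sum_ite_eq, Finset.mem_univ, if_true, Finset.mul_sum, mul_assoc]
  · have h' : x ≠ y.rev := by grind [Fin.rev_rev]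
    simp only [h, if_false, A_mulVec, h']
    have hz : D.z = D.q - D.qi := rfl
    have hq := D.q_mul
    rcases lt_trichotomy x y with hxy | rfl | hxy
    · have := D.f_inv y x hxy.ne' h'
      simp only [hxy, hxy.not_gt, if_true, if_false]
      linear_combination v (x, y, w) * this
    · simp only [lt_irrefl, if_false, D.f_self x h']
      linear_combination v (x, x, w) * hq - v (x, x, w) * D.q * hz
    · have := D.f_inv y x hxy.ne h'
      simp only [hxy, hxy.not_gt, if_true, if_false]
      linear_combination v (x, y, w) * this

/-! ### Moving the invariant tensor through the braiding -/

/-- The vector `(Σ_a g a • e_a ⊗ e_{a'}) ⊗ e_c`; these vectors span the image of `K₁`. -/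
def cup (c : Fin N) : Fin N × Fin N × Fin N → F :=
  fun p => if p.2.1 = p.1.rev ∧ p.2.2 = c then D.g p.1 else 0

lemma C_cup (c x y w : Fin N) : (D.C *ᵥ D.cup c) (x, y, w) =
    if w = y.rev then (if x = c then D.g c * D.M y c.rev else 0) else
      (if w = x.rev ∧ y = c then D.f w c * D.g x else 0)
        + (if y = x.rev ∧ w = c ∧ w < y then D.z * D.g x else 0) := by
  rw [C_mulVec]
  simp only [cup]
  split_ifs with h1 h2 <;> try grind
  · subst h2
    rw [Finset.sum_eq_single x.rev (by intro b _ hb; simp [hb]) (by simp)]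
    simp [mul_comm]
  · apply Finset.sum_eq_zero
    intro b _
    have : ¬ (b = x.rev ∧ b.rev = c) := by
      rintro ⟨rfl, h⟩; exact h2 (by simpa using h)
    simp [this]

/-- Braiding `e_c` past the invariant tensor moves it to the first factor with no extra scalar. -/
lemma AC_cup (c x y w : Fin N) : (D.A *ᵥ (D.C *ᵥ D.cup c)) (x, y, w) =
    if w = y.rev ∧ x = c then D.g y else 0 := by
  rw [A_mulVec]
  simp only [C_cup]
  have hgc := D.g_rev c
  by_cases h : y = x.rev
  · subst h
    simp only [if_true, Fin.rev_rev]
    by_cases hw : w = c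
    · subst hw
      have h0 : ∀ a : Fin N, D.M x a * (if w = a then (if a = w then D.g w * D.M a.rev w.rev else 0)
          else (if w = a.rev ∧ a.rev = w then D.f w w * D.g a else 0)
            + (if True ∧ True ∧ w < a.rev then D.z * D.g a else 0)) =
          (if a = w then D.M x w * D.g w * D.M w.rev w.rev
              - (if w < w.rev then D.z * D.g w * D.M x w else 0) else 0)
          + (if a = w.rev then (if w = w.rev then 0 else D.f w w * D.g w.rev * D.M x w.rev) else 0)
          + D.z * (if a < w.rev then D.g a * D.M x a else 0) := by
        intro a
        have h2 : w < a.rev ↔ a < w.rev := Fin.lt_rev_iff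
        by_cases h1 : a = w
        · subst h1
          grind
        · by_cases h3 : a = w.rev
          · subst h3
            simp only [Fin.rev_rev]
            grind
          · grind [Fin.rev_rev]
      simp only [and_true, true_and] at h0 ⊢
      rw [Finset.sum_congr rfl (fun p _ => h0 p), Finset.sum_add_distrib, Finset.sum_add_distrib,
        Finset.sum_ite_eq', Finset.sum_ite_eq', ← Finset.mul_sum, ← Finset.sum_filter]
      simp only [Finset.mem_univ, if_true]
      have ht := D.trunc x w
      have e1 : (if w = x ∧ x = w then D.g x.rev else 0) = if x = w then D.g w.rev else 0 := by grind
      have e2 : (if x = w then D.g w.rev else 0) = D.g w.rev * if x = w then 1 else 0 := by simp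
      rw [e1, e2, ← ht]
      rcases lt_trichotomy w w.rev with h1 | h1 | h1
      · have : D.M w.rev w.rev = D.z - D.z * D.g w.rev * D.g w.rev := by
          unfold M
          simp [h1, h1.ne']
        rw [this]
        simp only [h1, h1.ne, if_true, if_false]
        grind
      · have e : D.M w w = D.f w w := by
          unfold M; simp [← h1]
        simp only [← h1] at hgc ⊢
        simp only [lt_irrefl, if_false, if_true, e]
        grind
      · have : D.M w.rev w.rev = 0 := D.M_eq_zero (by simpa using h1)
        rw [this]
        simp only [h1.not_gt, h1.ne', if_false]
        grind
    · have h3 : ¬ (w = x ∧ x = c) := by rintro ⟨rfl, rfl⟩; exact hw rfl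
      rw [if_neg h3]
      apply Finset.sum_eq_zero
      intro a _
      grind [Fin.rev_rev]
  · have h' : x ≠ y.rev := by grind [Fin.rev_rev]
    simp only [h, h', if_false, false_and, add_zero]
    have h'' : y ≠ x.rev := h
    by_cases h1 : w = x.rev
    · subst h1
      by_cases hy : y = c
      · subst hy
        by_cases hxy : x = y
        · subst hxy
          have h4 : D.M x x.rev = D.qi := by
            unfold M
            simp [h', D.f_rev_self, D.f_anti x h']
          have hq := D.q_mul
          simp only [if_true, lt_irrefl, if_false, add_zero, and_true, D.f_self x h', h4]
          linear_combination D.g x * hq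
        · have h3 : x.rev ≠ y.rev := by simpa using hxy
          have h4 : D.M x y.rev = - if y < x then D.z * D.g x * D.g y.rev else 0 := by
            unfold M
            simp [hxy, h']
          have h5 : D.f x.rev y = D.f y x := by
            rw [← D.f_rev_rev, Fin.rev_rev, D.f_rev x y hxy h'']
          simp only [if_true, h3, if_false, and_true, false_and, true_and, h4, h5, hxy, add_zero]
          split_ifs
          · linear_combination (-D.f y x * D.z * D.g x) * hgc
          · ring
      · have h3 : x.rev = y.rev ↔ x = y := by simp
        simp only [if_true, h3, hy, and_false]
        grind
    · by_cases h2 : w = y.rev ∧ x = c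
      · obtain ⟨rfl, rfl⟩ := h2
        have hxy : x ≠ y := by rintro rfl; exact h1 rfl
        have h5 : D.f y.rev x = D.f x y := by
          rw [← D.f_rev_rev, Fin.rev_rev, D.f_rev y x hxy.symm h']
        have h6 := D.f_inv x y hxy h''
        have h7 : y < x → D.M y x.rev = 0 := fun h => D.M_eq_zero (by simpa using h)
        simp only [h1, if_false, if_true, and_self, h5]
        split_ifs with h8
        · rw [h7 h8]
          linear_combination D.g y * h6
        · linear_combination D.g y * h6
      · simp only [h1, h2, if_false]
        grind

lemma ACK : D.A * (D.C * D.K₁) = D.X := by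
  ext ⟨x, y, w⟩ ⟨a, b, c⟩
  change (D.A *ᵥ (D.C *ᵥ (D.K₁.col (a, b, c)))) (x, y, w) = _
  have hK : (D.K₁.col (a, b, c)) = (if b = a.rev then D.g a else 0) • D.cup c := by
    ext ⟨x, y, w⟩
    simp only [K₁, cup, Matrix.col_apply, of_apply, Pi.smul_apply, smul_eq_mul]
    grind
  rw [hK, Matrix.mulVec_smul, Matrix.mulVec_smul, Pi.smul_apply, AC_cup]
  simp only [X, of_apply, smul_eq_mul]
  grind

lemma CAK : D.C * (D.A * D.K₂) = D.Xᵀ := by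
  have h := congrArg (fun m => m.submatrix (flip N) (flip N)) D.transpose.ACK
  simpa only [← Matrix.submatrix_mul_equiv _ _ _ (flip N) _, A_flip, C_flip, K_flip, X_flip] using h

lemma K₁_symm : D.K₁ᵀ = D.K₁ := by
  ext i j
  simp only [K₁, Matrix.transpose_apply, of_apply]
  grind

lemma K₂_symm : D.K₂ᵀ = D.K₂ := by
  ext i j
  simp only [K₂, Matrix.transpose_apply, of_apply]
  grind

lemma quad₂ : D.C * D.C = 1 + D.z • D.C - (D.z * D.lam) • D.K₂ := by
  have h := congrArg (fun m => m.submatrix (flip N) (flip N)) D.transpose.quad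
  simp only [← Matrix.submatrix_mul_equiv _ _ _ (flip N) _, A_flip] at h
  rw [h]
  have hz : D.transpose.z = D.z := rfl
  have hl : D.transpose.lam = D.lam := rfl
  rw [← A_flip, ← K_flip, hz, hl]
  ext i j
  simp [Matrix.one_apply]

lemma KAC : D.K₂ * (D.A * D.C) = D.X := by
  have h := congrArg Matrix.transpose D.transpose.CAK
  rw [Matrix.transpose_mul, Matrix.transpose_mul, A_transpose, C_transpose, K₂_symm,
    Matrix.transpose_transpose, Matrix.transpose_transpose, Matrix.transpose_transpose,
    Matrix.mul_assoc] at h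
  exact h

lemma KCA : D.K₁ * (D.C * D.A) = D.Xᵀ := by
  have h := congrArg Matrix.transpose D.transpose.ACK
  rw [Matrix.transpose_mul, Matrix.transpose_mul, A_transpose, C_transpose, K₁_symm,
    Matrix.transpose_transpose, Matrix.transpose_transpose, Matrix.mul_assoc] at h
  exact h

/-! ### The kernel of the defect -/

/-- The defect of the braid relation. -/
def B : Matrix (Fin N × Fin N × Fin N) (Fin N × Fin N × Fin N) F :=
  D.A * D.C * D.A - D.C * D.A * D.C

/-- The terms `X` arising from the two quadratic relations cancel, which leaves an intertwining
relation for `B`. -/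
lemma B_mul_A : D.B * D.A = D.z • D.B - D.C * D.B := by
  unfold B
  have h1 : D.A * D.C * D.A * D.A = D.A * D.C + D.z • (D.A * D.C * D.A)
      - (D.z * D.lam) • D.X := by
    rw [Matrix.mul_assoc (D.A * D.C), quad, Matrix.mul_sub, Matrix.mul_add, Matrix.mul_one,
      Matrix.mul_smul, Matrix.mul_smul, Matrix.mul_assoc D.A D.C D.K₁, ACK]
  have h2 : D.C * (D.C * D.A * D.C) = D.A * D.C + D.z • (D.C * D.A * D.C)
      - (D.z * D.lam) • D.X := by
    rw [Matrix.mul_assoc D.C D.A, ← Matrix.mul_assoc D.C D.C, quad₂, Matrix.sub_mul,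
      Matrix.add_mul, Matrix.one_mul, Matrix.smul_mul, Matrix.smul_mul, KAC]
  have h3 : D.C * (D.A * D.C * D.A) = D.C * D.A * D.C * D.A := by
    simp only [Matrix.mul_assoc]
  rw [Matrix.sub_mul, Matrix.mul_sub, h1, h2, h3, smul_sub]
  abel

lemma B_mul_C : D.B * D.C = D.z • D.B - D.A * D.B := by
  unfold B
  have h1 : D.C * D.A * D.C * D.C = D.C * D.A + D.z • (D.C * D.A * D.C)
      - (D.z * D.lam) • D.Xᵀ := by
    rw [Matrix.mul_assoc (D.C * D.A), quad₂, Matrix.mul_sub, Matrix.mul_add, Matrix.mul_one,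
      Matrix.mul_smul, Matrix.mul_smul, Matrix.mul_assoc D.C D.A D.K₂, CAK]
  have h2 : D.A * (D.A * D.C * D.A) = D.C * D.A + D.z • (D.A * D.C * D.A)
      - (D.z * D.lam) • D.Xᵀ := by
    rw [Matrix.mul_assoc D.A D.C, ← Matrix.mul_assoc D.A D.A, quad, Matrix.sub_mul,
      Matrix.add_mul, Matrix.one_mul, Matrix.smul_mul, Matrix.smul_mul, KCA]
  have h3 : D.A * (D.C * D.A * D.C) = D.A * D.C * D.A * D.C := by
    simp only [Matrix.mul_assoc]
  rw [Matrix.sub_mul, Matrix.mul_sub, h1, h2, h3, smul_sub]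
  abel

/-- The kernel of `B` is stable under `A`. -/
lemma inv_A {v : Fin N × Fin N × Fin N → F} (h : D.B *ᵥ v = 0) : D.B *ᵥ (D.A *ᵥ v) = 0 := by
  rw [Matrix.mulVec_mulVec, B_mul_A, Matrix.sub_mulVec, Matrix.smul_mulVec,
    ← Matrix.mulVec_mulVec, h]
  simp

/-- The kernel of `B` is stable under `C`. -/
lemma inv_C {v : Fin N × Fin N × Fin N → F} (h : D.B *ᵥ v = 0) : D.B *ᵥ (D.C *ᵥ v) = 0 := by
  rw [Matrix.mulVec_mulVec, B_mul_C, Matrix.sub_mulVec, Matrix.smul_mulVec,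
    ← Matrix.mulVec_mulVec, h]
  simp

/-- The basis vector `e_a ⊗ e_b ⊗ e_c`. -/
def e (F : Type*) [Field F] {N : ℕ} (a b c : Fin N) : Fin N × Fin N × Fin N → F :=
  fun p => if p.1 = a ∧ p.2.1 = b ∧ p.2.2 = c then 1 else 0

/-- The braid relation holds on the basis vector `e_a ⊗ e_b ⊗ e_c`. -/
def Kill (a b c : Fin N) : Prop := D.B *ᵥ e F a b c = 0

lemma mulVec_e (m : Matrix (Fin N × Fin N × Fin N) (Fin N × Fin N × Fin N) F) (a b c : Fin N) :
    m *ᵥ e F a b c = m.col (a, b, c) := by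
  have : e F a b c = Pi.single (a, b, c) 1 := by
    ext ⟨x, y, w⟩
    simp [e, Pi.single_apply]
  rw [this, Matrix.mulVec_single_one]

lemma B_flip : D.transpose.B.submatrix (flip N) (flip N) = -D.B := by
  unfold B
  rw [Matrix.submatrix_sub, Pi.sub_apply, Pi.sub_apply]
  simp only [← Matrix.submatrix_mul_equiv _ _ _ (flip N) _, A_flip, C_flip]
  abel

lemma Kill.flip {D : BraidData F N} {a b c : Fin N} (h : D.transpose.Kill c.rev b.rev a.rev) :
    D.Kill a b c := by
  unfold Kill at *
  rw [mulVec_e] at *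
  ext p
  have h1 := congrFun h (BraidData.flip N p)
  have h2 := congrFun (congrFun D.B_flip p) (a, b, c)
  have h3 : D.transpose.B (BraidData.flip N p) (BraidData.flip N (a, b, c)) = 0 := h1
  rw [Matrix.submatrix_apply, h3] at h2
  simpa using h2.symm

lemma kill_iff (a b c : Fin N) : D.Kill a b c ↔
    D.A *ᵥ (D.C *ᵥ (D.A *ᵥ e F a b c)) = D.C *ᵥ (D.A *ᵥ (D.C *ᵥ e F a b c)) := by
  unfold Kill B
  rw [Matrix.sub_mulVec, sub_eq_zero]
  simp only [Matrix.mulVec_mulVec, Matrix.mul_assoc]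

lemma A_e {a b : Fin N} (c : Fin N) (h : b ≠ a.rev) : D.A *ᵥ e F a b c =
    D.f a b • e F b a c + (if b < a then D.z else 0) • e F a b c := by
  ext ⟨x, y, w⟩
  simp only [A_mulVec, e, Pi.add_apply, Pi.smul_apply, smul_eq_mul]
  by_cases h1 : y = x.rev
  · subst h1
    have h2 : ¬ (x = a ∧ x.rev = b ∧ w = c) := by rintro ⟨rfl, rfl, -⟩; exact h rfl
    have h3 : ¬ (x = b ∧ x.rev = a ∧ w = c) := by rintro ⟨rfl, rfl, -⟩; simp at h
    simp only [if_true, h2, h3, if_false]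
    rw [Finset.sum_eq_zero]
    · ring
    · intro k _
      grind
  · simp only [h1, if_false]
    grind

lemma C_e {b c : Fin N} (a : Fin N) (h : c ≠ b.rev) : D.C *ᵥ e F a b c =
    D.f b c • e F a c b + (if c < b then D.z else 0) • e F a b c := by
  ext ⟨x, y, w⟩
  simp only [C_mulVec, e, Pi.add_apply, Pi.smul_apply, smul_eq_mul]
  by_cases h1 : w = y.rev
  · subst h1
    have h2 : ¬ (x = a ∧ y = b ∧ y.rev = c) := by rintro ⟨-, rfl, rfl⟩; exact h rfl
    have h3 : ¬ (x = a ∧ y = c ∧ y.rev = b) := by rintro ⟨-, rfl, rfl⟩; simp at h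
    simp only [if_true, h2, h3, if_false]
    rw [Finset.sum_eq_zero]
    · ring
    · intro k _
      grind
  · simp only [h1, if_false]
    grind

lemma A_e_rev (a c x y w : Fin N) : (D.A *ᵥ e F a a.rev c) (x, y, w) =
    if y = x.rev ∧ w = c then D.M x a else 0 := by
  simp only [A_mulVec, e]
  by_cases h1 : y = x.rev
  · subst h1
    rw [if_pos rfl, Finset.sum_eq_single a (by intro b _ hb; simp [hb]) (by simp)]
    simp
  · have h2 : ¬ (x = a ∧ y = a.rev ∧ w = c) := by rintro ⟨rfl, rfl, -⟩; exact h1 rfl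
    have h3 : ¬ (y = a ∧ x = a.rev ∧ w = c) := by rintro ⟨rfl, rfl, -⟩; simp at h1
    simp [h1, h2, h3]

lemma C_e_rev (a b x y w : Fin N) : (D.C *ᵥ e F a b b.rev) (x, y, w) =
    if w = y.rev ∧ x = a then D.M y b else 0 := by
  simp only [C_mulVec, e]
  by_cases h1 : w = y.rev
  · subst h1
    rw [if_pos rfl, Finset.sum_eq_single b (by intro b _ hb; simp [hb]) (by simp)]
    simp
  · have h2 : ¬ (x = a ∧ y = b ∧ w = b.rev) := by rintro ⟨-, rfl, rfl⟩; exact h1 rfl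
    have h3 : ¬ (x = a ∧ w = b ∧ y = b.rev) := by rintro ⟨-, rfl, rfl⟩; simp at h1
    simp [h1, h2, h3]

lemma f_ne_zero {a b : Fin N} (h : a ≠ b) (h' : b ≠ a.rev) : D.f a b ≠ 0 :=
  left_ne_zero_of_mul_eq_one (D.f_inv a b h h')

lemma M_rev_self {a : Fin N} (h : a < a.rev) : D.M a.rev a = D.qi := by
  unfold M
  simp [h.ne', D.f_anti a h.ne]

/-- The braid relation passes from `(a, b, c)` with `a < b` to `(b, a, c)`, because `A` sends the former
vector to a nonzero multiple of the latter, up to vectors `e_x ⊗ e_{x'} ⊗ e_c` with `x > b` that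
occur only if `b = a'`. -/
lemma swap₁ {a b c : Fin N} (hab : a < b) (h : D.Kill a b c)
    (h' : b = a.rev → ∀ x, b < x → D.Kill x x.rev c) : D.Kill b a c := by
  have hA := D.inv_A h
  by_cases hb : b = a.rev
  · subst hb
    have h2 := h' rfl
    have hq : D.qi ≠ 0 := right_ne_zero_of_mul_eq_one D.q_mul
    have h0 : D.A *ᵥ e F a a.rev c = D.qi • e F a.rev a c +
        ∑ x with a.rev < x, D.M x a • e F x x.rev c := by
      ext ⟨x, y, w⟩
      rw [A_e_rev, Pi.add_apply, Finset.sum_apply, Finset.sum_filter,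
        Finset.sum_eq_single x (by intro b _ hb; simp [e, hb.symm]) (by simp)]
      simp only [Pi.smul_apply, smul_eq_mul, e]
      rcases lt_trichotomy x a.rev with h3 | rfl | h3
      · simp [D.M_eq_zero h3, h3.ne, h3.not_gt]
      · simp [D.M_rev_self hab]
      · simp [h3, h3.ne']
    rw [h0, Matrix.mulVec_add, Matrix.mulVec_sum, Finset.sum_eq_zero, add_zero,
      Matrix.mulVec_smul] at hA
    · exact (smul_eq_zero.mp hA).resolve_left hq
    · intro x hx
      have := h2 x (by simpa using hx)
      unfold Kill at this
      rw [Matrix.mulVec_smul, this, smul_zero]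
  · rw [A_e _ _ hb, if_neg hab.not_gt, zero_smul, add_zero, Matrix.mulVec_smul] at hA
    exact (smul_eq_zero.mp hA).resolve_left (D.f_ne_zero hab.ne hb)

lemma Kill.flip' {D : BraidData F N} {a b c : Fin N} (h : D.Kill a b c) :
    D.transpose.Kill c.rev b.rev a.rev := by
  apply Kill.flip
  rw [Fin.rev_rev, Fin.rev_rev, Fin.rev_rev]
  exact h

/-- The mirror image of `swap₁`, acting on the last two tensor factors. -/
lemma swap₂ {a b c : Fin N} (hbc : b < c) (h : D.Kill a b c)
    (h' : c = b.rev → ∀ x, c < x → D.Kill a x x.rev) : D.Kill a c b := by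
  apply Kill.flip
  apply D.transpose.swap₁ (by simpa using hbc) h.flip'
  intro hb x hx
  rw [Fin.rev_rev] at hb
  have := (h' hb.symm x (hb ▸ hx)).flip'
  rwa [Fin.rev_rev] at this

/-- Without a pair of mutually opposite indices, `A` and `C` permute the sorted vector up to
scalars. -/
lemma kill_generic {a b c : Fin N} (hab : a ≤ b) (hbc : b ≤ c) (h1 : b ≠ a.rev) (h2 : c ≠ b.rev)
    (h3 : c ≠ a.rev) : D.Kill a b c := by
  rw [kill_iff]
  simp only [A_e, C_e, Matrix.mulVec_smul, h1, h2, h3, ne_eq, not_false_eq_true,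
    hab.not_gt, hbc.not_gt, (hab.trans hbc).not_gt, if_false, zero_smul, add_zero, smul_smul]
  congr 1
  ring

/-! ### Sorted basis vectors -/

lemma AC_e_rev {d i : Fin N} (h : d ≤ i.rev) (x y w : Fin N) :
    (D.A *ᵥ (D.C *ᵥ e F d i i.rev)) (x, y, w) =
      if y = x.rev then (if w = d then D.M x d * D.M d.rev i else 0)
      else if y = d ∧ w = x.rev then D.f d x * D.M x i else 0 := by
  rw [A_mulVec]
  simp only [C_e_rev, Fin.rev_rev]
  by_cases h1 : y = x.rev
  · rw [if_pos h1, if_pos h1, Finset.sum_eq_single d (by intro b _ hb; simp [hb]) (by simp)]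
    simp
  · rw [if_neg h1, if_neg h1]
    have h2 : y < d → D.M y i = 0 := fun h' => D.M_eq_zero (h'.trans_le h)
    grind

/-- The vectors whose outer indices are opposite, with the middle index strictly between them. -/
lemma kill_mid {a d : Fin N} (h1 : a < d) (h2 : d < a.rev) : D.Kill a d a.rev := by
  rw [kill_iff]
  have h3 : a.rev ≠ d.rev := by simpa using h1.ne
  have h4 : a ≠ d.rev := by intro h; rw [h, Fin.rev_rev] at h2; exact h2.false
  rw [A_e _ _ h2.ne, C_e _ _ h3, if_neg h1.not_gt, if_neg h2.not_gt]
  simp only [zero_smul, add_zero, Matrix.mulVec_smul]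
  ext ⟨x, y, w⟩
  rw [Pi.smul_apply, Pi.smul_apply, AC_e_rev _ h2.le, C_mulVec]
  simp only [smul_eq_mul, A_e_rev, D.f_rev d a h1.ne' h4]
  have hM : ∀ x, x < a.rev → D.M x a = 0 := fun x => D.M_eq_zero
  have h5 : d.rev < a.rev := by simpa using h1
  rw [hM _ h5]
  have hf : ∀ x, a.rev ≤ x → D.f x.rev d = D.f d x := by
    intro x hx
    rw [← D.f_rev_rev, Fin.rev_rev, D.f_rev x d (h2.trans_le hx).ne']
    rintro rfl
    exact absurd (Fin.rev_le_iff.mp hx) (by omega)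
  have h7 : a.rev < d.rev → False := fun h => absurd h h5.not_gt
  have h6 : D.M d a = 0 := hM _ h2
  by_cases hw : w = y.rev
  · subst hw
    rw [if_pos rfl, Finset.sum_eq_zero]
    · by_cases hy : y = x.rev
      · simp [hy]
      · have : ¬ (y = d ∧ y = x) ∨ D.M x a = 0 := by
          by_cases h : y = d ∧ y = x
          · right; obtain ⟨rfl, rfl⟩ := h; exact h6
          · exact Or.inl h
        rcases this with h | h <;> simp [h, hy]
    · intro k _
      by_cases h : k = x.rev ∧ k.rev = d
      · obtain ⟨rfl, h⟩ := h
        rw [Fin.rev_rev] at h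
        subst h
        simp [h6]
      · simp [h]
  · rw [if_neg hw]
    by_cases hx : x < a.rev
    · simp [hM _ hx]
    · have hx' : x.rev ≤ a := Fin.rev_le_iff.mpr (not_lt.mp hx)
      have h8 : d ≠ x.rev := (hx'.trans_lt h1).ne'
      have h9 := hf x (not_lt.mp hx)
      by_cases hy : y = x.rev
      · subst hy
        have h10 : ¬ d < x.rev := (hx'.trans_lt h1).not_gt
        grind
      · grind

lemma CAC_e_rev {d i : Fin N} (h : d < i.rev) (hd : d < d.rev) (x y w : Fin N) :
    (D.C *ᵥ (D.A *ᵥ (D.C *ᵥ e F d i i.rev))) (x, y, w) =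
      if y = x.rev then (if w = d then D.M x i else 0)
      else if y = d ∧ w = x.rev then
        D.f d x * (if d.rev < x then D.z * D.M x i + D.M x d * D.M d.rev i else 0) else 0 := by
  rw [C_mulVec]
  simp only [AC_e_rev _ h.le]
  have hM : ∀ x, x < i.rev → D.M x i = 0 := fun x => D.M_eq_zero
  have hM' : ∀ x, x < d.rev → D.M x d = 0 := fun x => D.M_eq_zero
  have e1 := hM _ h
  have e2 := hM' _ hd
  by_cases hw : w = y.rev
  · subst hw
    rw [if_pos rfl, Finset.sum_eq_zero]
    · by_cases hy : y = x.rev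
      · subst hy
        simp only [if_true, Fin.rev_rev]
        split_ifs with h1
        · rw [h1, e1]
        · rfl
      · rw [if_neg hy]
        split_ifs with h1 h2
        · have h3 : d = x := by rw [← h1.1]; exact Fin.rev_inj.mp h1.2
          subst h3
          exact absurd h2 hd.not_gt
        · rw [mul_zero]
        · rfl
    · intro k _
      split_ifs with h1 h2 h2
      · subst h1
        have : x = d := by simpa using h2
        rw [this, e2]; ring
      · ring
      · have : x = d := by rw [← h2.1]; exact (Fin.rev_inj.mp h2.2).symm
        rw [this, e1]; ring
      · ring
  · rw [if_neg hw]
    by_cases hy : y = x.rev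
    · subst hy
      rw [Fin.rev_rev] at hw
      simp only [if_true]
      by_cases h1 : w = x.rev
      · subst h1
        simp only [if_true, lt_irrefl, if_false, add_zero]
        by_cases h2 : x.rev = d
        · subst h2
          rw [Fin.rev_rev] at *
          have hx : D.M x x.rev = D.qi := by
            have := D.M_rev_self (a := x.rev) (by rwa [Fin.rev_rev])
            rwa [Fin.rev_rev] at this
          simp only [if_true, D.f_self x.rev (by rw [Fin.rev_rev]; exact hd.ne), hx]
          linear_combination D.M x i * D.q_mul
        · simp [h2]
      · simp only [if_neg h1, and_true]
        by_cases h2 : w = d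
        · subst h2
          simp only [if_true]
          have h3 : x ≠ w.rev := by rintro rfl; simp at h1
          have h4 := D.f_rev w x hw h3
          have h5 := D.f_inv w x hw h3
          have h6 : w < x.rev → D.M x w = 0 := fun h => hM' x (Fin.lt_rev_iff.mp h)
          rw [h4]
          split_ifs with h7
          · rw [h6 h7]; linear_combination D.M x i * h5
          · linear_combination D.M x i * h5
        · simp [h2]
    · have hy' : x ≠ y.rev := by grind [Fin.rev_rev]
      simp only [if_neg hy]
      by_cases h1 : w = x.rev
      · subst h1
        by_cases h2 : y = d
        · subst h2
          have h3 : x.rev < y ↔ y.rev < x := Fin.rev_lt_iff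
          simp only [if_true, true_and, h3]
          have h4 : x ≠ y := by rintro rfl; exact hw rfl
          have h5 : D.f x.rev y = D.f y x := by
            rw [← D.f_rev_rev, Fin.rev_rev, D.f_rev x y h4 hy]
          rw [h5]
          split_ifs with h7
          · ring
          · rw [hM' x (lt_of_le_of_ne (not_lt.mp h7) hy')]; ring
        · simp [h2]
      · have h2 : ¬ (w = d ∧ y = x.rev) := fun h => hy h.2
        simp [h1, hy]

/-- The sorted vectors whose last two indices are opposite, with a strictly smaller first index. -/
lemma kill_right {d i : Fin N} (h1 : d < i) (h2 : i ≤ i.rev) : D.Kill d i i.rev := by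
  rw [kill_iff]
  have h3 : d < i.rev := h1.trans_le h2
  have h4 : i < d.rev := Fin.lt_rev_iff.mp h3
  have h5 : i.rev < d.rev := by simpa using h1
  have h6 : d < d.rev := h1.trans h4
  rw [A_e _ _ h4.ne, if_neg h1.not_gt, zero_smul, add_zero, Matrix.mulVec_smul, C_e _ _ h5.ne,
    if_neg h3.not_gt, zero_smul, add_zero, Matrix.mulVec_smul, Matrix.mulVec_smul]
  ext ⟨x, y, w⟩
  rw [CAC_e_rev _ h3 h6]
  simp only [Pi.smul_apply, smul_eq_mul, A_e_rev]
  rw [D.f_rev d i h1.ne h4.ne, ← mul_assoc, D.f_inv d i h1.ne h4.ne, one_mul]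
  by_cases hy : y = x.rev
  · simp [hy]
  · rw [if_neg hy, if_neg (fun h => hy h.1)]
    split_ifs with h7 h8
    · have hg := D.g_rev d
      have e1 : D.M x i = - (D.z * D.g x * D.g i) := by
        unfold M
        rw [if_neg (h5.trans h8).ne', if_neg, if_pos (h5.trans h8)]
        · ring
        · rintro ⟨rfl, -⟩; exact absurd h4 h8.not_gt
      have e2 : D.M x d = - (D.z * D.g x * D.g d) := by
        unfold M
        rw [if_neg h8.ne', if_neg, if_pos h8]
        · ring
        · rintro ⟨rfl, -⟩; exact absurd h6 h8.not_gt
      have e3 : D.M d.rev i = - (D.z * D.g d.rev * D.g i) := by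
        unfold M
        rw [if_neg h5.ne', if_neg, if_pos h5]
        · ring
        · rintro ⟨h, -⟩; exact absurd h h4.ne'
      rw [e1, e2, e3]
      linear_combination (-D.f d x * D.z ^ 2 * D.g x * D.g i) * hg
    · ring
    · rfl

/-- The sorted vectors `e_d ⊗ e_d ⊗ e_{d'}`. -/
lemma kill_right' {d : Fin N} (h1 : d < d.rev) : D.Kill d d d.rev := by
  rw [kill_iff]
  rw [A_e _ _ h1.ne, if_neg (lt_irrefl _), zero_smul, add_zero, Matrix.mulVec_smul,
    Matrix.mulVec_smul]
  ext ⟨x, y, w⟩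
  rw [CAC_e_rev _ h1 h1]
  simp only [AC_e_rev _ h1.le, Pi.smul_apply, smul_eq_mul, D.f_self d h1.ne, D.M_rev_self h1]
  have hq := D.q_mul
  have hz : D.z = D.q - D.qi := rfl
  by_cases hy : y = x.rev
  · simp only [if_pos hy]
    split_ifs
    · linear_combination D.M x d * hq
    · ring
  · simp only [if_neg hy]
    split_ifs with h7 h8
    · rw [hz]; ring
    · rw [D.M_eq_zero (lt_of_le_of_ne (not_lt.mp h8) ?_)]
      · ring
      · rintro rfl; exact hy (by simpa using h7.1)
    · ring

/-- The vector `e_m ⊗ e_m ⊗ e_m` for the self-opposite index `m`. Both sides of the braid relation are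
compared with an explicit vector `T`. -/
lemma kill_center {m : Fin N} (hm : m.rev = m) : D.Kill m m m := by
  rw [kill_iff]
  have hM : ∀ x, x < m → D.M x m = 0 := fun x h => D.M_eq_zero (by rwa [hm])
  have hmm : D.M m m = 1 := by
    unfold M; simp [hm, D.f_mid m hm.symm]
  have hf : ∀ x, x ≠ m → D.f m x = D.f x m ∧ D.f x.rev m = D.f x m ∧ D.f x m * D.f x m = 1
      ∧ D.f m x.rev = D.f x m := by
    intro x hx
    have h1 : m ≠ x.rev := by intro h; apply hx; rw [← Fin.rev_rev x, ← h, hm]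
    have h2 := D.f_rev x m hx (by rwa [hm, ne_comm] at *)
    have h3 := D.f_rev m x hx.symm (by rwa [hm])
    rw [hm] at h2
    have h4 := D.f_inv x m hx h1
    refine ⟨h2.symm, ?_, ?_, h3⟩
    · rw [← D.f_rev_rev, Fin.rev_rev, hm]
    · rwa [← h2] at h4
  have h1 : ∀ x y w, (D.C *ᵥ (D.A *ᵥ e F m m m)) (x, y, w) = if w = y.rev then
      (if x = m then D.M y m else 0) else if w = x.rev ∧ y = m then D.f w y * D.M x m else 0 := by
    intro x y w
    rw [C_mulVec]
    have h0 : ∀ x y w, (D.A *ᵥ e F m m m) (x, y, w) = if y = x.rev ∧ w = m then D.M x m else 0 := by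
      intro x y w
      have := D.A_e_rev m m x y w
      rwa [hm] at this
    simp only [h0]
    by_cases hw : w = y.rev
    · rw [if_pos hw, if_pos hw, Finset.sum_eq_single x.rev (by intro b _ hb; simp [hb]) (by simp)]
      rw [Fin.rev_rev]
      split_ifs <;> grind
    · rw [if_neg hw, if_neg hw]
      have h3 : y = x.rev → w = m → w < y → D.M x m = 0 := by
        rintro rfl rfl h
        exact hM x (by rw [← Fin.rev_lt_rev, hm]; exact h)
      grind
  have h2 : ∀ x y w, (D.A *ᵥ (D.C *ᵥ e F m m m)) (x, y, w) =
      if y = x.rev then (if w = m then D.M x m else 0)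
      else if y = m ∧ w = x.rev then D.f m x * D.M x m else 0 := by
    intro x y w
    have := D.AC_e_rev (d := m) (i := m) hm.ge x y w
    rwa [hm, hmm, mul_one] at this
  let T : Fin N → Fin N → Fin N → F := fun x y w =>
    if y = x.rev then (if w = m then D.M x m else 0)
    else if w = x.rev ∧ y = m then (1 + D.z) * D.f x m * D.M x m
    else if w = y.rev ∧ x = m then D.M y m else 0
  have hx0 : ∀ x, m < x.rev ↔ x < m := fun x => by rw [← Fin.lt_rev_iff, hm]
  have hx1 : ∀ x, x.rev < m ↔ m < x := fun x => by rw [Fin.rev_lt_iff, hm]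
  have hx2 : ∀ x, x.rev = m ↔ x = m := fun x => by rw [rev_eq, hm]
  have hx3 : ∀ x, m = x.rev ↔ x = m := fun x => by rw [eq_comm, hx2]
  ext ⟨x, y, w⟩
  trans T x y w
  · rw [A_mulVec]
    simp only [h1, T]
    by_cases hy : y = x.rev
    · rw [if_pos hy, if_pos hy, Finset.sum_eq_single m]
      · simp [hm, hmm]; grind
      · intro b _ hb
        have : ¬ (w = b.rev ∧ b.rev = m) := fun h => hb ((hx2 b).1 h.2)
        simp [hb, hx2]
      · simp
    · rw [if_neg hy, if_neg hy]
      by_cases hw : w = x.rev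
      · subst hw
        simp only [if_true, true_and, Fin.rev_inj]
        by_cases h3 : y = m
        · subst h3
          have h4 : x ≠ y := by rintro rfl; exact hy hm.symm
          obtain ⟨h5, h6, -, -⟩ := hf x h4
          simp only [if_true, h4, if_false, h5, h6]
          split_ifs with h7
          · ring
          · rw [hM x (lt_of_le_of_ne (not_lt.mp h7) h4)]; ring
        · grind
      · simp only [hw, if_false, false_and]
        by_cases h3 : w = y.rev ∧ x = m
        · obtain ⟨rfl, rfl⟩ := h3
          have h4 : y ≠ x := by rintro rfl; exact hw rfl
          obtain ⟨-, h6, h7, -⟩ := hf y h4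
          simp only [if_true, and_self, h6]
          split_ifs with h8
          · rw [hM y h8]; ring
          · linear_combination D.M y x * h7
        · grind
  · rw [C_mulVec]
    simp only [h2, T]
    by_cases hw : w = y.rev
    · subst hw
      rw [if_pos rfl, Finset.sum_eq_single x.rev]
      · simp only [if_true, Fin.rev_rev, Fin.rev_inj]
        by_cases h3 : x = m
        · subst h3; simp only [hm, hmm]; grind
        · by_cases h4 : y = x.rev
          · subst h4; simp [h3]
          · grind
      · intro b _ hb
        have : ¬ (b = m ∧ b = x) := by
          rintro ⟨rfl, rfl⟩; exact hb hm.symm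
        simp [hb, this]
      · simp
    · rw [if_neg hw]
      by_cases hy : y = x.rev
      · subst hy
        rw [Fin.rev_rev] at hw
        simp only [if_true, hx2, and_true]
        by_cases h3 : w = m
        · subst h3
          obtain ⟨h5, h6, h7, h8⟩ := hf x (Ne.symm hw)
          have h9 : w ≠ x.rev := by rw [ne_eq, hx3]; exact Ne.symm hw
          simp only [if_true, h9, if_false, hx0, h5, h8]
          split_ifs with h10
          · rw [hM x h10]; ring
          · linear_combination -D.M x w * h7
        · grind
      · simp only [hy, if_false, and_false]
        by_cases h3 : w = x.rev
        · subst h3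
          simp only [if_true, and_true, true_and, Fin.rev_inj]
          by_cases h3 : y = m
          · subst h3
            have h4 : x ≠ y := by rintro rfl; exact hw rfl
            obtain ⟨h5, h6, -, -⟩ := hf x h4
            simp only [if_true, h5, h6, hx1]
            split_ifs with h7
            · ring
            · rw [hM x (lt_of_le_of_ne (not_lt.mp h7) h4)]; ring
          · grind
        · simp [h3, hw]

/-- The mirror image of `kill_right`. -/
lemma kill_left {i d : Fin N} (h1 : i ≤ i.rev) (h2 : i.rev < d) : D.Kill i i.rev d := by
  apply Kill.flip
  rw [Fin.rev_rev]
  exact D.transpose.kill_right (Fin.rev_lt_iff.mp h2) h1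

/-- The mirror image of `kill_right'`. -/
lemma kill_left' {d : Fin N} (h1 : d < d.rev) : D.Kill d d.rev d.rev := by
  apply Kill.flip
  rw [Fin.rev_rev]
  exact D.transpose.kill_right' h1

lemma kill_sorted {a b c : Fin N} (hab : a ≤ b) (hbc : b ≤ c) : D.Kill a b c := by
  by_cases h2 : c = b.rev
  · subst h2
    rcases hab.lt_or_eq with h | rfl
    · exact D.kill_right h hbc
    · rcases hbc.lt_or_eq with h | h
      · exact D.kill_right' h
      · rw [← h]; exact D.kill_center h.symm
  by_cases h1 : b = a.rev
  · subst h1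
    rcases hbc.lt_or_eq with h | rfl
    · exact D.kill_left hab h
    · rcases hab.lt_or_eq with h | h
      · exact D.kill_left' h
      · exact absurd (by simpa using h.symm) h2
  by_cases h3 : c = a.rev
  · subst h3
    refine D.kill_mid (lt_of_le_of_ne hab ?_) (lt_of_le_of_ne hbc h1)
    rintro rfl
    exact h2 rfl
  exact D.kill_generic hab hbc h1 h2 h3

/-! ### The induction -/

/-- The measure for the induction: the number of inversions of `(a, b, c)`, plus four times a quantity
that decreases as the indices move away from the centre. Replacing an opposite pair `(a, a')` by
`(x, x')` with `x` further out lowers that quantity, and since there are at most three inversions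
the factor four outweighs any new ones. -/
def height (a b c : Fin N) : ℕ :=
  4 * (3 * N - (max a.val a.rev.val + max b.val b.rev.val + max c.val c.rev.val))
    + ((if b < a then 1 else 0) + (if c < b then 1 else 0) + if c < a then 1 else 0)

lemma kill_all (k : ℕ) : ∀ a b c : Fin N, height a b c = k → D.Kill a b c := by
  induction k using Nat.strong_induction_on with
  | _ k ih =>
    rintro a b c rfl
    rcases lt_or_ge b a with hab | hab
    · refine D.swap₁ hab (ih _ ?_ _ _ _ rfl) fun h x hx => ih _ ?_ _ _ _ rfl
      · unfold height; split_ifs <;> omega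
      · have := Fin.val_rev b
        have := Fin.val_rev a
        have := Fin.val_rev x
        unfold height; subst h; rw [Fin.rev_rev]; split_ifs <;> omega
    rcases lt_or_ge c b with hbc | hbc
    · refine D.swap₂ hbc (ih _ ?_ _ _ _ rfl) fun h x hx => ih _ ?_ _ _ _ rfl
      · unfold height; split_ifs <;> omega
      · have := Fin.val_rev b
        have := Fin.val_rev c
        have := Fin.val_rev x
        unfold height; subst h; rw [Fin.rev_rev]; split_ifs <;> omega
    exact D.kill_sorted hab hbc

/-- The braid relation for arbitrary braid data. -/
theorem braid : D.A * D.C * D.A = D.C * D.A * D.C := by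
  rw [← sub_eq_zero]
  ext p ⟨a, b, c⟩
  have h := D.kill_all _ a b c rfl
  unfold Kill at h
  rw [mulVec_e] at h
  exact congrFun h p

end BraidData

/-! ### The scalars of the basic braided matrix -/

namespace BraidData
variable {F : Type*} [Field F]

/-- The coefficient of `E_{i+1,j+1} ⊗ E_{j+1,i+1}` in the basic braided `R`-matrix, with `p = rs` and
zero-based indices, so that `n` is the middle index and `i + j = 2n` says that `j` is opposite
to `i`. -/
def coef (n : ℕ) (t p : F) (i j : ℕ) : F :=
  if i = j then (if i = n then 1 else t ^ (2 : ℤ))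
  else if i + j = 2 * n then t ^ (-2 : ℤ)
  else if i = n ∨ j = n then 1
  else if (i < j ∧ j < n) ∨ (i < n ∧ n < j ∧ 2 * n < i + j) ∨
      (n < i ∧ j < n ∧ i + j < 2 * n) ∨ (n < j ∧ j < i) then p⁻¹
  else p

lemma coef_inv {n : ℕ} {t p : F} (hp : p ≠ 0) {i j : ℕ} (h : i ≠ j) (h' : i + j ≠ 2 * n) :
    coef n t p i j * coef n t p j i = 1 := by
  unfold coef
  rw [if_neg h, if_neg h.symm, if_neg h', if_neg (by omega : ¬ j + i = 2 * n)]
  split_ifs <;> first | (exfalso; omega) | simp [hp]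

lemma coef_rev {n : ℕ} {t p : F} {i j : ℕ} (hi : i ≤ 2 * n) (hj : j ≤ 2 * n) (h : i ≠ j)
    (h' : i + j ≠ 2 * n) : coef n t p (2 * n - j) i = coef n t p i j := by
  unfold coef
  rw [if_neg h, if_neg h', if_neg (by omega : ¬ 2 * n - j = i),
    if_neg (by omega : ¬ 2 * n - j + i = 2 * n)]
  split_ifs <;> first | (exfalso; omega) | rfl

/-- One step of the telescoping sum: the weights `m_i` change by `2` between neighbours, except that
they change by `1` on either side of the middle index. -/
lemma step {t : F} (ht : t ≠ 0) (n k : ℕ) :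
    (if k = n then 1 else t ^ (-2 : ℤ)) * (t ^ mwt n (k + 1)) ^ 2 =
      (if k + 1 = n then 1 else t ^ (2 : ℤ)) * (t ^ mwt n (k + 2)) ^ 2 := by
  have e1 : (if k = n then 1 else t ^ (-2 : ℤ)) = t ^ (if k = n then 0 else -2 : ℤ) := by
    split_ifs <;> simp
  have e2 : (if k + 1 = n then 1 else t ^ (2 : ℤ)) = t ^ (if k + 1 = n then 0 else 2 : ℤ) := by
    split_ifs <;> simp
  rw [e1, e2, pow_two, pow_two, ← zpow_add₀ ht, ← zpow_add₀ ht, ← zpow_add₀ ht, ← zpow_add₀ ht]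
  congr 1
  unfold mwt
  push_cast
  split_ifs <;> omega

/-- The telescoping identity for the weights. The last summand accounts for the middle index, whose
boundary terms carry the coefficient `1` in place of `t^{±2}`. -/
lemma tel_nat {t : F} (ht : t ≠ 0) (n lo hi : ℕ) (h : lo < hi) :
    (t ^ (2 : ℤ) - t ^ (-2 : ℤ)) * ∑ k ∈ Finset.Ico (lo + 1) hi, (t ^ mwt n (k + 1)) ^ 2 =
      (if lo = n then 1 else t ^ (-2 : ℤ)) * (t ^ mwt n (lo + 1)) ^ 2
      - (if hi = n then 1 else t ^ (2 : ℤ)) * (t ^ mwt n (hi + 1)) ^ 2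
      + if lo < n ∧ n < hi then t ^ (2 : ℤ) - t ^ (-2 : ℤ) else 0 := by
  induction hi, h using Nat.le_induction with
  | base =>
    have := step ht n lo
    have h1 : ¬ (lo < n ∧ n < lo.succ) := by omega
    rw [if_neg h1]
    simp only [Finset.Ico_self, Finset.sum_empty, Nat.succ_eq_add_one]
    linear_combination -this
  | succ hi h ih =>
    have h0 := step ht n hi
    rw [Finset.sum_Ico_succ_top h, mul_add, ih]
    by_cases h1 : hi = n
    · subst h1
      have h2 : mwt hi (hi + 1) = 0 := by simp [mwt]
      have h3 : lo < hi := h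
      simp only [h2, h3, if_true, lt_irrefl, and_false, if_false, true_and, lt_add_one, zpow_zero]
        at h0 ⊢
      linear_combination -h0
    · have h2 : (lo < n ∧ n < hi + 1) ↔ (lo < n ∧ n < hi) := by omega
      simp only [h1, h2, if_false] at h0 ⊢
      linear_combination -h0

lemma sum_fin {N : ℕ} (G : ℕ → F) (lo hi : ℕ) (h : hi ≤ N) :
    ∑ p : Fin N with lo < p.val ∧ p.val < hi, G p = ∑ k ∈ Finset.Ico (lo + 1) hi, G k := by
  rw [Finset.sum_filter, Fin.sum_univ_eq_sum_range (fun k => if lo < k ∧ k < hi then G k else 0) N,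
    ← Finset.sum_filter]
  congr 1
  ext k
  simp only [Finset.mem_filter, Finset.mem_range, Finset.mem_Ico]
  omega

/-- The braid data of the basic braided `R`-matrix, with `p = rs`. The scalar `lam` is the boundary term
of the telescoping sum just past the last index. -/
def concrete (n : ℕ) (t p : F) (ht : t ≠ 0) (hp : p ≠ 0) : BraidData F (2 * n + 1) where
  f a b := coef n t p b a
  g a := t ^ mwt n (a + 1)
  q := t ^ (2 : ℤ)
  qi := t ^ (-2 : ℤ)
  lam := t ^ (2 : ℤ) * (t ^ mwt n (2 * n + 2)) ^ 2
  q_mul := by rw [← zpow_add₀ ht]; simp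
  g_rev a := by
    rw [← zpow_add₀ ht, Fin.val_rev]
    have : mwt n (a + 1) + mwt n (2 * n + 1 - (a + 1) + 1) = 0 := by
      have := a.isLt
      unfold mwt
      split_ifs <;> omega
    rw [this, zpow_zero]
  f_inv a b h h' := by
    rw [ne_eq, Fin.ext_iff] at h h'
    rw [Fin.val_rev] at h'
    exact coef_inv hp (Ne.symm h) (by omega)
  f_rev a b h h' := by
    rw [ne_eq, Fin.ext_iff] at h h'
    rw [Fin.val_rev] at h'
    have e : (b.rev : ℕ) = 2 * n - b := by rw [Fin.val_rev]; omega
    rw [e]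
    exact coef_rev (by omega) (by omega) h (by omega)
  f_self a h := by
    rw [ne_eq, Fin.ext_iff, Fin.val_rev] at h
    have h' : (a : ℕ) ≠ n := by omega
    simp [coef, h']
  f_anti a h := by
    rw [ne_eq, Fin.ext_iff, Fin.val_rev] at h
    have e : (a.rev : ℕ) = 2 * n - a := by rw [Fin.val_rev]; omega
    rw [e]
    unfold coef
    rw [if_neg (by omega), if_pos (by omega)]
  f_mid a h := by
    rw [Fin.ext_iff, Fin.val_rev] at h
    simp [coef, (by omega : (a : ℕ) = n)]
  tel lo hi h := by
    have h0 := tel_nat ht n lo hi h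
    have e := sum_fin (N := 2 * n + 1) (fun k => (t ^ mwt n (k + 1)) ^ 2) lo hi hi.isLt.le
    rw [← e] at h0
    simp only [Fin.lt_def, Fin.val_rev] at h0 ⊢
    rw [h0]
    have e1 : coef n t p (2 * n + 1 - (lo + 1)) lo = if (lo : ℕ) = n then 1 else t ^ (-2 : ℤ) := by
      unfold coef
      split_ifs <;> first | rfl | (exfalso; omega)
    have e2 : coef n t p hi hi = if (hi : ℕ) = n then 1 else t ^ (2 : ℤ) := by simp [coef]
    have e3 : ((lo : ℕ) < 2 * n + 1 - (lo + 1) ∧ 2 * n + 1 - ((hi : ℕ) + 1) < hi) ↔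
      ((lo : ℕ) < n ∧ n < (hi : ℕ)) := by omega
    rw [e1, e2]
    simp only [e3]
  tel_top lo := by
    have h0 := tel_nat ht n lo (2 * n + 1) lo.isLt
    have e := sum_fin (N := 2 * n + 1) (fun k => (t ^ mwt n (k + 1)) ^ 2) lo (2 * n + 1) le_rfl
    rw [← e] at h0
    simp only [Fin.lt_def, Fin.val_rev, Fin.is_lt, and_true] at h0 ⊢
    rw [h0]
    have e1 : coef n t p (2 * n + 1 - (lo + 1)) lo = if (lo : ℕ) = n then 1 else t ^ (-2 : ℤ) := by
      unfold coef
      split_ifs <;> first | rfl | (exfalso; omega)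
    have e3 : ((lo : ℕ) < 2 * n + 1 - (lo + 1)) ↔ ((lo : ℕ) < n ∧ n < 2 * n + 1) := by omega
    rw [e1, if_neg (by omega : ¬ 2 * n + 1 = n)]
    simp only [e3]

/-! ### Entries of the basic braided matrix -/

lemma sum_one (S : Finset ℕ) (i₀ : ℕ) (c : F) :
    ∑ i ∈ S, (if i = i₀ then c else 0) = if i₀ ∈ S then c else 0 := by
  simp

lemma sum_two (S : Finset ℕ) (T : ℕ → Finset ℕ) (i₀ j₀ : ℕ) (c : F) :
    ∑ i ∈ S, ∑ j ∈ T i, (if i = i₀ ∧ j = j₀ then c else 0) =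
      if i₀ ∈ S ∧ j₀ ∈ T i₀ then c else 0 := by
  simp [ite_and]

variable (n : ℕ) (x y a b : Fin (2 * n + 1))

lemma E_ij (i j : ℕ) : (Eunit F n i j ⊗ₖ Eunit F n j i) (x, y) (a, b) =
    if i = x + 1 ∧ j = a + 1 then (if x = b ∧ y = a then 1 else 0) else 0 := by
  simp only [Eunit, kroneckerMap_apply, of_apply, Fin.ext_iff]
  simp only [mul_ite, mul_one, mul_zero, ← ite_and]
  exact if_congr (by omega) rfl rfl

lemma E_ji (i j : ℕ) : (Eunit F n j i ⊗ₖ Eunit F n i j) (x, y) (a, b) =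
    if i = a + 1 ∧ j = x + 1 then (if x = b ∧ y = a then 1 else 0) else 0 := by
  rw [E_ij]; simp only [and_comm]

lemma E_diag (i j : ℕ) : (Eunit F n i i ⊗ₖ Eunit F n j j) (x, y) (a, b) =
    if i = x + 1 ∧ j = y + 1 then (if x = a ∧ y = b then 1 else 0) else 0 := by
  simp only [Eunit, kroneckerMap_apply, of_apply, Fin.ext_iff]
  simp only [mul_ite, mul_one, mul_zero, ← ite_and]
  exact if_congr (by omega) rfl rfl

lemma E_cup {i j : ℕ} (hi : i ≤ 2 * n + 1) (hj : j ≤ 2 * n + 1) (c : ℕ → ℕ → F) :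
    c i j * (Eunit F n i (pr n j) ⊗ₖ Eunit F n (pr n i) j) (x, y) (a, b) =
    if i = x + 1 ∧ j = b + 1 then (if y = x.rev ∧ b = a.rev then c (x + 1) (b + 1) else 0)
      else 0 := by
  have h1 : pr n i = 2 * n + 2 - i := rfl
  have h2 : pr n j = 2 * n + 2 - j := rfl
  simp only [Eunit, kroneckerMap_apply, of_apply, Fin.ext_iff, Fin.val_rev,
    mul_ite, mul_one, mul_zero, ← ite_and]
  by_cases h : i = x + 1 ∧ j = b + 1
  · obtain ⟨rfl, rfl⟩ := h
    exact if_congr (by omega) rfl rfl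
  · rw [if_neg (by omega), if_neg (by tauto)]

lemma E_self (i : ℕ) : (Eunit F n i i ⊗ₖ Eunit F n i i) (x, y) (a, b) =
    if i = x + 1 then (if x = b ∧ y = a then (if x = a then 1 else 0) else 0) else 0 := by
  simp only [Eunit, kroneckerMap_apply, of_apply, Fin.ext_iff]
  simp only [mul_ite, mul_one, mul_zero, ← ite_and]
  exact if_congr (by omega) rfl rfl

lemma E_col (i k : ℕ) : (Eunit F n i k ⊗ₖ Eunit F n k i) (x, y) (a, b) =
    if i = x + 1 then (if x = b ∧ y = a then (if a + 1 = k then 1 else 0) else 0) else 0 := by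
  simp only [Eunit, kroneckerMap_apply, of_apply, Fin.ext_iff]
  simp only [mul_ite, mul_one, mul_zero, ← ite_and]
  exact if_congr (by omega) rfl rfl

lemma E_row (i k : ℕ) : (Eunit F n k i ⊗ₖ Eunit F n i k) (x, y) (a, b) =
    if i = a + 1 then (if x = b ∧ y = a then (if x + 1 = k then 1 else 0) else 0) else 0 := by
  simp only [Eunit, kroneckerMap_apply, of_apply, Fin.ext_iff]
  simp only [mul_ite, mul_one, mul_zero, ← ite_and]
  exact if_congr (by omega) rfl rfl

lemma E_anti (i : ℕ) : (Eunit F n (pr n i) i ⊗ₖ Eunit F n i (pr n i)) (x, y) (a, b) =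
    if i = a + 1 then (if x = b ∧ y = a then (if x = a.rev then 1 else 0) else 0) else 0 := by
  have h1 : pr n i = 2 * n + 2 - i := rfl
  simp only [Eunit, kroneckerMap_apply, of_apply, Fin.ext_iff, Fin.val_rev, mul_ite, mul_one,
    mul_zero, ← ite_and]
  exact if_congr (by omega) rfl rfl

lemma sum_four {P Q R S : Prop} [Decidable P] [Decidable Q] [Decidable R] [Decidable S]
    (h : ¬ (P ∧ Q)) (h1 : ¬ (P ∧ R)) (h2 : ¬ (P ∧ S)) (h3 : ¬ (Q ∧ R)) (h4 : ¬ (Q ∧ S))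
    (h5 : ¬ (R ∧ S)) :
    (if P then (1 : F) else 0) + (if Q then 1 else 0) + (if R then 1 else 0)
      + (if S then 1 else 0) = if P ∨ Q ∨ R ∨ S then 1 else 0 := by
  by_cases P <;> by_cases Q <;> by_cases R <;> by_cases S <;> simp_all

/-- Apart from the two sums over `i > j`, exactly one of the index ranges in the definition of `R`
contains a given pair, and the coefficient attached to it is `coef`. -/
lemma coef_sum_nat (n x a : ℕ) (t p : F) :
    t ^ (2 : ℤ) * (if x ≠ n then (if x = a then 1 else 0) else 0)
    + p⁻¹ * ((if x < a ∧ a < n then 1 else 0) + (if x < n ∧ n < a ∧ 2 * n < x + a then 1 else 0)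
      + (if n < x ∧ a < n ∧ x + a < 2 * n then 1 else 0) + (if n < a ∧ a < x then 1 else 0))
    + p * ((if a < x ∧ x < n then 1 else 0) + (if n < x ∧ x < a then 1 else 0)
      + (if a < n ∧ n < x ∧ 2 * n < x + a then 1 else 0)
      + (if n < a ∧ x < n ∧ x + a < 2 * n then 1 else 0))
    + (if x ≠ n then (if a = n then 1 else 0) else 0)
    + (if a ≠ n then (if x = n then 1 else 0) else 0)
    + t ^ (-2 : ℤ) * (if a ≠ n then (if x + a = 2 * n then 1 else 0) else 0)
    + (if x = n ∧ a = n then 1 else 0) = coef n t p x a := by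
  rw [sum_four (by omega) (by omega) (by omega) (by omega) (by omega) (by omega),
    sum_four (by omega) (by omega) (by omega) (by omega) (by omega) (by omega)]
  simp only [← ite_and]
  unfold coef
  by_cases c1 : x = a
  · subst c1
    by_cases c2 : x = n
    · subst c2; simp
    · rw [if_pos ⟨c2, rfl⟩, if_neg (by omega), if_neg (by omega), if_neg (by omega),
        if_neg (by omega), if_neg (by omega), if_pos rfl, if_neg c2]
      simp
  rw [if_neg (by omega), if_neg c1]
  by_cases c2 : x + a = 2 * n
  · rw [if_neg (by omega), if_neg (by omega), if_neg (by omega), if_neg (by omega),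
      if_pos (by omega), if_neg (by omega), if_pos c2]
    simp
  rw [if_neg c2]
  by_cases c3 : x = n
  · rw [if_neg (by omega), if_neg (by omega), if_neg (by omega), if_pos (by omega),
      if_neg (by omega), if_neg (by omega), if_pos (by omega)]
    simp
  by_cases c4 : a = n
  · rw [if_neg (by omega), if_neg (by omega), if_pos (by omega), if_neg (by omega),
      if_neg (by omega), if_neg (by omega), if_pos (by omega)]
    simp
  by_cases c5 : (x < a ∧ a < n) ∨ (x < n ∧ n < a ∧ 2 * n < x + a) ∨
      (n < x ∧ a < n ∧ x + a < 2 * n) ∨ (n < a ∧ a < x)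
  · rw [if_pos c5, if_neg (by omega), if_neg (by omega), if_neg (by omega),
      if_neg (by omega), if_neg (by omega), if_neg (by omega), if_pos c5]
    simp
  · rw [if_neg c5, if_pos (by omega), if_neg (by omega), if_neg (by omega),
      if_neg (by omega), if_neg (by omega), if_neg (by omega), if_neg c5]
    simp

lemma coef_sum (t p : F) :
    t ^ (2 : ℤ) * (if (x : ℕ) + 1 ∈ (Icc 1 (2 * n + 1)).erase (n + 1) then
        (if x = a then 1 else 0) else 0)
    + p⁻¹ * ((if (x : ℕ) + 1 ∈ Icc 1 n ∧ (a : ℕ) + 1 ∈ Icc (x + 1 + 1 : ℕ) n then 1 else 0)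
      + (if (x : ℕ) + 1 ∈ Icc 2 n ∧ (a : ℕ) + 1 ∈ Icc (pr n (x + 1 - 1)) (pr n 1) then 1 else 0)
      + (if (a : ℕ) + 1 ∈ Icc 1 (n - 1) ∧ (x : ℕ) + 1 ∈ Icc (pr n n) (pr n (a + 1 + 1))
          then 1 else 0)
      + (if (a : ℕ) + 1 ∈ Icc (pr n n) (pr n 2) ∧ (x : ℕ) + 1 ∈ Icc (a + 1 + 1 : ℕ) (pr n 1)
          then 1 else 0))
    + p * ((if (a : ℕ) + 1 ∈ Icc 1 n ∧ (x : ℕ) + 1 ∈ Icc (a + 1 + 1 : ℕ) n then 1 else 0)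
      + (if (x : ℕ) + 1 ∈ Icc (pr n n) (pr n 2) ∧ (a : ℕ) + 1 ∈ Icc (x + 1 + 1 : ℕ) (pr n 1)
          then 1 else 0)
      + (if (a : ℕ) + 1 ∈ Icc 2 n ∧ (x : ℕ) + 1 ∈ Icc (pr n (a + 1 - 1)) (pr n 1) then 1 else 0)
      + (if (x : ℕ) + 1 ∈ Icc 1 (n - 1) ∧ (a : ℕ) + 1 ∈ Icc (pr n n) (pr n (x + 1 + 1))
          then 1 else 0))
    + (if (x : ℕ) + 1 ∈ (Icc 1 (2 * n + 1)).erase (n + 1) then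
        (if (a : ℕ) + 1 = n + 1 then 1 else 0) else 0)
    + (if (a : ℕ) + 1 ∈ (Icc 1 (2 * n + 1)).erase (n + 1) then
        (if (x : ℕ) + 1 = n + 1 then 1 else 0) else 0)
    + t ^ (-2 : ℤ) * (if (a : ℕ) + 1 ∈ (Icc 1 (2 * n + 1)).erase (n + 1) then
        (if x = a.rev then 1 else 0) else 0)
    + (if (x : ℕ) = n ∧ (a : ℕ) = n then 1 else 0) = coef n t p x a := by
  have hpr : ∀ k, pr n k = 2 * n + 2 - k := fun _ => rfl
  have hx := x.isLt
  have ha := a.isLt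
  have m1 : (x : ℕ) + 1 ∈ (Icc 1 (2 * n + 1)).erase (n + 1) ↔ (x : ℕ) ≠ n := by
    simp only [Finset.mem_erase, Finset.mem_Icc]; omega
  have m2 : (a : ℕ) + 1 ∈ (Icc 1 (2 * n + 1)).erase (n + 1) ↔ (a : ℕ) ≠ n := by
    simp only [Finset.mem_erase, Finset.mem_Icc]; omega
  have q1 : ((x : ℕ) + 1 ∈ Icc 1 n ∧ (a : ℕ) + 1 ∈ Icc (x + 1 + 1 : ℕ) n) ↔
      ((x : ℕ) < a ∧ (a : ℕ) < n) := by
    simp only [Finset.mem_Icc]; omega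
  have q2 : ((x : ℕ) + 1 ∈ Icc 2 n ∧ (a : ℕ) + 1 ∈ Icc (pr n (x + 1 - 1)) (pr n 1)) ↔
      ((x : ℕ) < n ∧ n < (a : ℕ) ∧ 2 * n < (x : ℕ) + a) := by
    simp only [Finset.mem_Icc, hpr]; omega
  have q3 : ((a : ℕ) + 1 ∈ Icc 1 (n - 1) ∧ (x : ℕ) + 1 ∈ Icc (pr n n) (pr n (a + 1 + 1))) ↔
      (n < (x : ℕ) ∧ (a : ℕ) < n ∧ (x : ℕ) + a < 2 * n) := by
    simp only [Finset.mem_Icc, hpr]; omega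
  have q4 : ((a : ℕ) + 1 ∈ Icc (pr n n) (pr n 2) ∧ (x : ℕ) + 1 ∈ Icc (a + 1 + 1 : ℕ) (pr n 1)) ↔
      (n < (a : ℕ) ∧ (a : ℕ) < x) := by
    simp only [Finset.mem_Icc, hpr]; omega
  have r1 : ((a : ℕ) + 1 ∈ Icc 1 n ∧ (x : ℕ) + 1 ∈ Icc (a + 1 + 1 : ℕ) n) ↔
      ((a : ℕ) < x ∧ (x : ℕ) < n) := by
    simp only [Finset.mem_Icc]; omega
  have r2 : ((x : ℕ) + 1 ∈ Icc (pr n n) (pr n 2) ∧ (a : ℕ) + 1 ∈ Icc (x + 1 + 1 : ℕ) (pr n 1)) ↔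
      (n < (x : ℕ) ∧ (x : ℕ) < a) := by
    simp only [Finset.mem_Icc, hpr]; omega
  have r3 : ((a : ℕ) + 1 ∈ Icc 2 n ∧ (x : ℕ) + 1 ∈ Icc (pr n (a + 1 - 1)) (pr n 1)) ↔
      ((a : ℕ) < n ∧ n < (x : ℕ) ∧ 2 * n < (x : ℕ) + a) := by
    simp only [Finset.mem_Icc, hpr]; omega
  have r4 : ((x : ℕ) + 1 ∈ Icc 1 (n - 1) ∧ (a : ℕ) + 1 ∈ Icc (pr n n) (pr n (x + 1 + 1))) ↔
      (n < (a : ℕ) ∧ (x : ℕ) < n ∧ (x : ℕ) + a < 2 * n) := by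
    simp only [Finset.mem_Icc, hpr]; omega
  have e1 : x = a ↔ (x : ℕ) = a := Fin.ext_iff
  have e2 : x = a.rev ↔ (x : ℕ) + a = 2 * n := by rw [Fin.ext_iff, Fin.val_rev]; omega
  simp only [m1, m2, q1, q2, q3, q4, r1, r2, r3, r4, e1, e2, add_left_inj]
  exact coef_sum_nat n x a t p

lemma sum_ij (S : Finset ℕ) (T : ℕ → Finset ℕ) :
    ∑ i ∈ S, ∑ j ∈ T i, (Eunit F n i j ⊗ₖ Eunit F n j i) (x, y) (a, b) =
      if (x : ℕ) + 1 ∈ S ∧ (a : ℕ) + 1 ∈ T (x + 1) then (if x = b ∧ y = a then 1 else 0) else 0 := by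
  simp only [E_ij, sum_two]

lemma sum_ji (S : Finset ℕ) (T : ℕ → Finset ℕ) :
    ∑ i ∈ S, ∑ j ∈ T i, (Eunit F n j i ⊗ₖ Eunit F n i j) (x, y) (a, b) =
      if (a : ℕ) + 1 ∈ S ∧ (x : ℕ) + 1 ∈ T (a + 1) then (if x = b ∧ y = a then 1 else 0) else 0 := by
  rw [Finset.sum_congr rfl fun i _ => Finset.sum_congr rfl fun j _ => E_ji n x y a b i j, sum_two]

lemma sum_self (S : Finset ℕ) :
    ∑ i ∈ S, (Eunit F n i i ⊗ₖ Eunit F n i i) (x, y) (a, b) =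
      if (x : ℕ) + 1 ∈ S then (if x = b ∧ y = a then (if x = a then 1 else 0) else 0) else 0 := by
  rw [Finset.sum_congr rfl fun i _ => E_self n x y a b i, sum_one]

lemma sum_col (S : Finset ℕ) (k : ℕ) :
    ∑ i ∈ S, (Eunit F n i k ⊗ₖ Eunit F n k i) (x, y) (a, b) =
      if (x : ℕ) + 1 ∈ S then (if x = b ∧ y = a then (if (a : ℕ) + 1 = k then 1 else 0) else 0)
        else 0 := by
  rw [Finset.sum_congr rfl fun i _ => E_col n x y a b i k, sum_one]

lemma sum_row (S : Finset ℕ) (k : ℕ) :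
    ∑ i ∈ S, (Eunit F n k i ⊗ₖ Eunit F n i k) (x, y) (a, b) =
      if (a : ℕ) + 1 ∈ S then (if x = b ∧ y = a then (if (x : ℕ) + 1 = k then 1 else 0) else 0)
        else 0 := by
  rw [Finset.sum_congr rfl fun i _ => E_row n x y a b i k, sum_one]

lemma sum_anti (S : Finset ℕ) :
    ∑ i ∈ S, (Eunit F n (pr n i) i ⊗ₖ Eunit F n i (pr n i)) (x, y) (a, b) =
      if (a : ℕ) + 1 ∈ S then (if x = b ∧ y = a then (if x = a.rev then 1 else 0) else 0)
        else 0 := by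
  rw [Finset.sum_congr rfl fun i _ => E_anti n x y a b i, sum_one]

/-- The basic braided `R`-matrix is the one attached to its braid data. -/
lemma Rmat_apply {r s t : F} (hr : r ≠ 0) (hs : s ≠ 0) (ht : t ≠ 0) (hts : t ^ 2 = r⁻¹ * s) :
    Rmat F n r s t (x, y) (a, b) =
      (concrete n t (r * s) ht (mul_ne_zero hr hs)).entry x y a b := by
  have h1 : r⁻¹ * s = t ^ (2 : ℤ) := by rw [← hts]; norm_cast
  have h2 : r * s⁻¹ = t ^ (-2 : ℤ) := by
    rw [_root_.zpow_neg, ← h1, mul_inv, inv_inv]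
  have h3 : r⁻¹ * s⁻¹ = (r * s)⁻¹ := by rw [mul_inv]
  have hK : ∑ i ∈ Icc 1 (2 * n + 1), ∑ j ∈ Icc 1 (i - 1),
      t ^ (mwt n i - mwt n j) * (Eunit F n i (pr n j) ⊗ₖ Eunit F n (pr n i) j) (x, y) (a, b)
      = if b < x then (if y = x.rev ∧ b = a.rev then t ^ (mwt n (x + 1) - mwt n (b + 1)) else 0)
        else 0 := by
    rw [Finset.sum_congr rfl fun i hi => Finset.sum_congr rfl fun j hj => E_cup n x y a b
      (by simp at hi; omega) (by simp at hi hj; omega) fun i j => t ^ (mwt n i - mwt n j), sum_two]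
    have : ((x : ℕ) + 1 ∈ Icc 1 (2 * n + 1) ∧ (b : ℕ) + 1 ∈ Icc 1 ((x : ℕ) + 1 - 1)) ↔ b < x := by
      simp only [Finset.mem_Icc, Fin.lt_def]; omega
    simp only [this]
  have hD : ∑ i ∈ Icc 1 (2 * n + 1), ∑ j ∈ Icc 1 (i - 1),
      (Eunit F n i i ⊗ₖ Eunit F n j j) (x, y) (a, b)
      = if y < x then (if x = a ∧ y = b then 1 else 0) else 0 := by
    simp only [E_diag, sum_two]
    have : ((x : ℕ) + 1 ∈ Icc 1 (2 * n + 1) ∧ (y : ℕ) + 1 ∈ Icc 1 ((x : ℕ) + 1 - 1)) ↔ y < x := by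
      simp only [Finset.mem_Icc, Fin.lt_def]; omega
    simp only [this]
  have hC := coef_sum n x a t (r * s)
  have hN : (Eunit F n (n + 1) (n + 1) ⊗ₖ Eunit F n (n + 1) (n + 1)) (x, y) (a, b) =
      if x = b ∧ y = a then (if (x : ℕ) = n ∧ (a : ℕ) = n then 1 else 0) else 0 := by
    rw [E_col]
    simp only [← ite_and]
    exact if_congr (by omega) rfl rfl
  have hS : Rmat F n r s t (x, y) (a, b) =
      (if x = b ∧ y = a then coef n t (r * s) x a else 0)
      + (t ^ (2 : ℤ) - t ^ (-2 : ℤ)) * ((if y < x then (if x = a ∧ y = b then 1 else 0) else 0)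
        - (if b < x then
          (if y = x.rev ∧ b = a.rev then t ^ (mwt n (x + 1) - mwt n (b + 1)) else 0) else 0)) := by
    rw [Rmat, h1, h2, h3]
    simp only [Matrix.add_apply, Matrix.sub_apply, Matrix.smul_apply, Matrix.sum_apply,
      smul_eq_mul, hK, hD, hN]
    simp only [↓sum_ij, ↓sum_ji, sum_self, sum_col, sum_row, sum_anti]
    by_cases h : x = b ∧ y = a
    · simp only [if_pos h]
      rw [← hC]
      ring
    · simp only [h, if_false, ite_self]
      ring
  rw [hS]
  have hg : b = a.rev → t ^ (mwt n (x + 1) - mwt n (b + 1)) =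
      t ^ mwt n (x + 1) * t ^ mwt n (a + 1) := by
    rintro rfl
    rw [← zpow_add₀ ht, Fin.val_rev]
    congr 1
    have := a.isLt
    unfold mwt
    split_ifs <;> omega
  have hd : (concrete n t (r * s) ht (mul_ne_zero hr hs)).entry x y a b =
      if y = x.rev then (if b = a.rev then
        (if x = a.rev then coef n t (r * s) x a else 0)
          + (if x = a ∧ a.rev < a then t ^ (2 : ℤ) - t ^ (-2 : ℤ) else 0)
          - (if a.rev < x then (t ^ (2 : ℤ) - t ^ (-2 : ℤ)) * t ^ mwt n (x + 1) * t ^ mwt n (a + 1)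
            else 0) else 0)
      else (if x = b ∧ y = a then coef n t (r * s) x a else 0)
        + (if x = a ∧ y = b ∧ b < a then t ^ (2 : ℤ) - t ^ (-2 : ℤ) else 0) := by
    simp only [entry, M, z, concrete]
    congr 1
    · congr 2
      congr 1
      by_cases h : x = a.rev
      · simp [h]
      · simp [h]
    · congr 1
      by_cases h : x = b ∧ y = a
      · rw [if_pos h, if_pos h, h.1]
      · rw [if_neg h, if_neg h]
  rw [hd]
  by_cases h : y = x.rev
  · subst h
    by_cases h' : b = a.rev
    · have e1 : (x = b ∧ x.rev = a) ↔ x = a.rev := by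
        subst h'; rw [rev_eq, and_self]
      rw [if_pos rfl, if_pos h', hg h']
      subst h'
      have e2 : (x = a ∧ a.rev < a) ↔ (x.rev < x ∧ x = a) := by
        constructor <;> rintro ⟨h1, h2⟩ <;> subst x <;>
          exact ⟨by first | assumption | rfl, by first | assumption | rfl⟩
      simp only [e1, e2, ite_and, and_self, Fin.rev_inj, if_true]
      split_ifs <;> ring
    · have e1 : ¬ (x = b ∧ x.rev = a) := by
        rintro ⟨rfl, rfl⟩; simp at h'
      have e2 : ¬ (x = a ∧ x.rev = b) := by
        rintro ⟨rfl, rfl⟩; simp at h'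
      simp [h', e1, e2]
  · have e2 : (x = a ∧ y = b ∧ b < a) ↔ (y < x ∧ x = a ∧ y = b) := by
      constructor
      · rintro ⟨rfl, rfl, h⟩; exact ⟨h, rfl, rfl⟩
      · rintro ⟨h, rfl, rfl⟩; exact ⟨rfl, rfl, h⟩
    simp only [h, if_false, false_and, e2, ite_and (y < x)]
    split_ifs <;> ring

lemma R12_eq {r s t : F} (hr : r ≠ 0) (hs : s ≠ 0) (ht : t ≠ 0) (hts : t ^ 2 = r⁻¹ * s) :
    R12 F n r s t = (concrete n t (r * s) ht (mul_ne_zero hr hs)).A := by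
  ext ⟨x, y, w⟩ ⟨a, b, c⟩
  simp only [R12, reindex_apply, submatrix_apply, Equiv.prodAssoc_symm_apply, kroneckerMap_apply,
    Matrix.one_apply, Rmat_apply n x y a b hr hs ht hts, A, of_apply, mul_ite, mul_one, mul_zero]

lemma R23_eq {r s t : F} (hr : r ≠ 0) (hs : s ≠ 0) (ht : t ≠ 0) (hts : t ^ 2 = r⁻¹ * s) :
    R23 F n r s t = (concrete n t (r * s) ht (mul_ne_zero hr hs)).C := by
  ext ⟨x, y, w⟩ ⟨a, b, c⟩
  simp only [R23, kroneckerMap_apply, Matrix.one_apply, Rmat_apply n y w b c hr hs ht hts, C,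
    of_apply, ite_mul, one_mul, zero_mul]

end BraidData

/-- **Braid relation** (part of Proposition 3.19): `R₁₂ R₂₃ R₁₂ = R₂₃ R₁₂ R₂₃`. -/
theorem braid_relation (n : ℕ) (hn : 1 ≤ n)
    (F : Type*) [Field F] (r s t : F)
    (hr : r ≠ 0) (hs : s ≠ 0) (ht : t ≠ 0) (hts : t ^ 2 = r⁻¹ * s) :
    R12 F n r s t * R23 F n r s t * R12 F n r s t
      = R23 F n r s t * R12 F n r s t * R23 F n r s t := by
  rw [BraidData.R12_eq n hr hs ht hts, BraidData.R23_eq n hr hs ht hts]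
  exact BraidData.braid _
end
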